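/- Let (u_n) and (v_n) be sequences of harmonic functions on the open unit disc 𝔻 ⊂ ℝ² such that for each n: Z(u_n) = Z(v_n) and u_n(x)·v_n(x) > 0 for every x ∈ 𝔻 ∖ Z(u_n). Suppose u_n converges to u uniformly on compact subsets of 𝔻, where u is harmonic and not identically zero, and v_n converges uniformly on compact subsets of 𝔻 to the harmonic function v(x, y) = Im((x + iy)^k) for some positive integer k. Then sup_n sup_{x ∈ B_{1/4} ∖ Z(v_n)} |∇(u_n/v_n)(x)| / (u_n(x)/v_n(x)) < +∞, where B_{1/4} is the disc of radius 1/4 centered at the origin. -/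

import Mathlib

open Metric Set Filter

noncomputable section

abbrev En (n : ℕ) : Type := EuclideanSpace ℝ (Fin n)

/-- The Laplacian of `u` at `x`, computed from the second iterated Fréchet derivative. -/
def laplacianAt {n : ℕ} (u : En n → ℝ) (x : En n) : ℝ :=
  ∑ i : Fin n, iteratedFDeriv ℝ 2 u x ![EuclideanSpace.single i 1, EuclideanSpace.single i 1]

/-- `u` is harmonic on `Ω`: twice continuously differentiable with vanishing Laplacian. -/
def HarmonicOnSet {n : ℕ} (u : En n → ℝ) (Ω : Set (En n)) : Prop :=
  ContDiffOn ℝ 2 u Ω ∧ ∀ x ∈ Ω, laplacianAt u x = 0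

/-- The zero set of `u` within `Ω`. -/
def zeroSet {n : ℕ} (u : En n → ℝ) (Ω : Set (En n)) : Set (En n) :=
  {x ∈ Ω | u x = 0}

/-- The collection of nodal domains of `u` in `Ω`, i.e. the connected components of
`Ω \ Z(u)`. -/
def nodalComponents {n : ℕ} (u : En n → ℝ) (Ω : Set (En n)) : Set (Set (En n)) :=
  {C | ∃ x ∈ Ω \ zeroSet u Ω, C = connectedComponentIn (Ω \ zeroSet u Ω) x}

/-!
A Harnack inequality with constant `exp (C * dist a b)` bounds the logarithmic gradient by `2 * C`,
so by compactness it suffices to prove one for `u / v` near each point, uniformly for `v` close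
to the limit `V`. Away from the zeros of `V` it is the classical one.

Near a zero of order `k` of `V`, rescale so that `v = im g` and `u = im h` with `g` holomorphic and
close to `z ^ k`. As `u` and `v` have the same sign, `h` is real wherever `g` is. In the coordinate
`log g` near the unit circle the set where `g` is real becomes the lines `im s ∈ π ℤ`. By reflection
across two adjacent ones `h` is invariant under `s ↦ s + 2πi`, that is, constant on the fibres
of `g`. Hence `h = F ∘ g`, where `F`, the average of `h` over the fibres of `g`, is holomorphic on
the disc, real on the real axis, and `im F` has the sign of `im`. So `u / v = (im F / im) ∘ g`,
and `im F / im` satisfies a Harnack inequality by the Poisson formula for the half-disc.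
-/

open scoped Topology ComplexConjugate
open InnerProductSpace

/-! ### Harnack inequalities -/

/-- A Harnack inequality on `S`, with the multiplicative constant `exp (C * dist a b)` so that
inequalities compose under products, quotients and averages, and differentiate to
`‖∇f‖ ≤ 2 C f`. -/
def HarnackOn {X : Type*} [PseudoMetricSpace X] (C : ℝ) (f : X → ℝ) (S : Set X) : Prop :=
  ∀ a ∈ S, ∀ b ∈ S, f a ≤ Real.exp (C * dist a b) * f b

namespace HarnackOn

section PseudoMetricSpace

variable {X Y : Type*} [PseudoMetricSpace X] [PseudoMetricSpace Y] {C D : ℝ} {f g : X → ℝ}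
  {S T : Set X}

lemma mono (hf : HarnackOn C f T) (h : S ⊆ T) : HarnackOn C f S :=
  fun a ha b hb => hf a (h ha) b (h hb)

lemma congr (hf : HarnackOn C f S) (h : EqOn f g S) : HarnackOn C g S :=
  fun a ha b hb => h ha ▸ h hb ▸ hf a ha b hb

lemma mul (hf : HarnackOn C f S) (hg : HarnackOn D g S) (hf₀ : ∀ a ∈ S, 0 ≤ f a)
    (hg₀ : ∀ a ∈ S, 0 ≤ g a) : HarnackOn (C + D) (fun a => f a * g a) S := by
  intro a ha b hb
  calc f a * g a ≤ (Real.exp (C * dist a b) * f b) * (Real.exp (D * dist a b) * g b) :=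
        mul_le_mul (hf a ha b hb) (hg a ha b hb) (hg₀ a ha)
          (mul_nonneg (Real.exp_nonneg _) (hf₀ b hb))
    _ = Real.exp ((C + D) * dist a b) * (f b * g b) := by rw [add_mul, Real.exp_add]; ring

lemma inv (hf : HarnackOn C f S) (hf₀ : ∀ a ∈ S, 0 < f a) :
    HarnackOn C (fun a => (f a)⁻¹) S := by
  intro a ha b hb
  have h := hf b hb a ha
  rw [dist_comm] at h
  rw [← div_eq_mul_inv, le_div_iff₀ (hf₀ b hb), mul_comm, ← div_eq_mul_inv, div_le_iff₀ (hf₀ a ha)]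
  exact h

lemma div (hf : HarnackOn C f S) (hg : HarnackOn D g S) (hf₀ : ∀ a ∈ S, 0 ≤ f a)
    (hg₀ : ∀ a ∈ S, 0 < g a) : HarnackOn (C + D) (fun a => f a / g a) S := by
  simpa only [div_eq_mul_inv] using
    hf.mul (hg.inv hg₀) hf₀ fun a ha => (inv_pos.2 (hg₀ a ha)).le

lemma const_mul (hf : HarnackOn C f S) {c : ℝ} (hc : 0 ≤ c) :
    HarnackOn C (fun a => c * f a) S := fun a ha b hb => by
  simpa only [mul_left_comm c] using mul_le_mul_of_nonneg_left (hf a ha b hb) hc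

lemma comp_lipschitzOnWith (hf : HarnackOn C f T) (hC : 0 ≤ C) {K : NNReal} {φ : Y → X}
    {S : Set Y} (hφ : LipschitzOnWith K φ S) (hST : MapsTo φ S T) (hf₀ : ∀ a ∈ S, 0 ≤ f (φ a)) :
    HarnackOn (C * K) (f ∘ φ) S := by
  intro a ha b hb
  refine (hf _ (hST ha) _ (hST hb)).trans ?_
  rw [mul_assoc]
  refine mul_le_mul_of_nonneg_right ?_ (hf₀ b hb)
  gcongr
  exact hφ.dist_le_mul a ha b hb

lemma of_lipschitzOnWith {K : NNReal} {c : ℝ} (hf : LipschitzOnWith K f S) (hc : 0 < c)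
    (hcf : ∀ a ∈ S, c ≤ f a) : HarnackOn (K / c) f S := by
  intro a ha b hb
  have hdist : f a ≤ f b + K * dist a b := by
    linarith [(le_abs_self _).trans (hf.dist_le_mul a ha b hb)]
  calc f a ≤ f b + K * dist a b * (f b / c) := by
        refine hdist.trans (add_le_add_right (le_mul_of_one_le_right (by positivity) ?_) _)
        exact (one_le_div hc).2 (hcf b hb)
    _ = (K / c * dist a b + 1) * f b := by ring
    _ ≤ Real.exp (K / c * dist a b) * f b :=
        mul_le_mul_of_nonneg_right (Real.add_one_le_exp _) (hc.le.trans (hcf b hb))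

lemma circleAverage {C : ℝ} {S : Set X} {k : X → ℂ → ℝ} {w : ℂ → ℝ} {c : ℂ} {R : ℝ}
    (hk : ∀ s ∈ sphere c |R|, HarnackOn C (fun a => k a s) S)
    (hw : ∀ s ∈ sphere c |R|, 0 ≤ w s)
    (hint : ∀ a ∈ S, CircleIntegrable (fun s => k a s * w s) c R) :
    HarnackOn C (fun a => Real.circleAverage (fun s => k a s * w s) c R) S := by
  intro a ha b hb
  rw [← smul_eq_mul, ← Real.circleAverage_fun_smul]
  refine Real.circleAverage_mono (hint a ha) ((hint b hb).const_smul) fun s hs => ?_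
  rw [smul_eq_mul, ← mul_assoc]
  exact mul_le_mul_of_nonneg_right (hk s hs a ha b hb) (hw s hs)

end PseudoMetricSpace

lemma norm_fderiv_le {E : Type*} [NormedAddCommGroup E] [NormedSpace ℝ E] {C : ℝ} {f : E → ℝ}
    {S : Set E} {x : E} (hf : HarnackOn C f S) (hC : 0 ≤ C) (hS : S ∈ 𝓝 x) (hfx : 0 ≤ f x) :
    ‖fderiv ℝ f x‖ ≤ 2 * C * f x := by
  refine norm_fderiv_le_of_lip' ℝ (by positivity) ?_
  have hsmall : ∀ᶠ y in 𝓝 x, C * dist x y < 1 := by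
    refine ContinuousAt.eventually_lt (by fun_prop) continuousAt_const ?_
    simp
  filter_upwards [hS, hsmall] with y hy hsmall
  have hx := mem_of_mem_nhds hS
  have h₁ := hf y hy x hx
  have h₂ := hf x hx y hy
  rw [dist_comm] at h₁
  set t := C * dist x y with ht
  have ht₀ : 0 ≤ t := by positivity
  have hexp : Real.exp t - 1 ≤ 2 * t := by
    have := (le_abs_self _).trans (Real.abs_exp_sub_one_le (x := t) (by
      rw [abs_of_nonneg ht₀]; exact hsmall.le))
    rwa [abs_of_nonneg ht₀] at this
  have hexp' : f x * Real.exp (-t) ≤ f y := by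
    rw [Real.exp_neg, ← div_eq_mul_inv, div_le_iff₀ (Real.exp_pos t), mul_comm]
    exact h₂
  have hlow : f x * (1 - t) ≤ f x * Real.exp (-t) :=
    mul_le_mul_of_nonneg_left (Real.one_sub_le_exp_neg t) hfx
  rw [Real.norm_eq_abs, ← dist_eq_norm, dist_comm y x,
    show 2 * C * f x * dist x y = 2 * t * f x by rw [ht]; ring, abs_le]
  constructor <;> nlinarith [mul_nonneg ht₀ hfx, mul_le_mul_of_nonneg_right hexp hfx]

end HarnackOn

/-! ### Poisson kernels of the disc and the half-disc -/

section Kernels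

lemma harnackOn_norm_sub {E : Type*} [SeminormedAddCommGroup E] {c s : E} {r R : ℝ} (hr : r < R)
    (hs : R ≤ ‖s - c‖) : HarnackOn (1 / (R - r)) (fun a => ‖s - a‖) (closedBall c r) := by
  have hlip : LipschitzWith 1 fun a => ‖s - a‖ := by
    refine LipschitzWith.of_dist_le_mul fun a b => ?_
    simpa [dist_comm a b, dist_eq_norm] using abs_norm_sub_norm_le (s - a) (s - b)
  refine HarnackOn.of_lipschitzOnWith (K := 1) hlip.lipschitzOnWith (sub_pos.2 hr) fun a ha => ?_
  rw [mem_closedBall_iff_norm] at ha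
  have : ‖s - c‖ ≤ ‖s - a‖ + ‖a - c‖ := norm_sub_le_norm_sub_add_norm_sub s a c
  linarith

lemma harnackOn_sq_sub_sq_norm_sub {E : Type*} [SeminormedAddCommGroup E] (c : E) {r R : ℝ}
    (hr₀ : 0 ≤ r) (hr : r < R) :
    HarnackOn (2 * r / (R ^ 2 - r ^ 2)) (fun a => R ^ 2 - ‖a - c‖ ^ 2) (closedBall c r) := by
  have hlip : LipschitzOnWith (2 * r).toNNReal (fun a => R ^ 2 - ‖a - c‖ ^ 2) (closedBall c r) := by
    refine LipschitzOnWith.of_dist_le_mul fun a ha b hb => ?_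
    rw [mem_closedBall_iff_norm] at ha hb
    have h : |‖b - c‖ - ‖a - c‖| ≤ dist a b := by
      simpa [dist_comm a b, dist_eq_norm] using abs_norm_sub_norm_le (b - c) (a - c)
    rw [Real.coe_toNNReal _ (by positivity), Real.dist_eq,
      show R ^ 2 - ‖a - c‖ ^ 2 - (R ^ 2 - ‖b - c‖ ^ 2) =
        (‖b - c‖ + ‖a - c‖) * (‖b - c‖ - ‖a - c‖) by ring, abs_mul, abs_of_nonneg (by positivity)]
    gcongr
    linarith
  have hpos : 0 < R ^ 2 - r ^ 2 := by nlinarith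
  convert HarnackOn.of_lipschitzOnWith hlip hpos fun a ha => ?_ using 2
  · rw [Real.coe_toNNReal _ (by positivity)]
  · rw [mem_closedBall_iff_norm] at ha
    gcongr

lemma continuousOn_poissonKernel {c w : ℂ} {R : ℝ} (hw : w ∈ ball c R) :
    ContinuousOn (poissonKernel c w) (sphere c R) := by
  refine ContinuousOn.congr (ContinuousOn.div (by fun_prop) (by fun_prop) fun s hs => ?_)
    fun s _ => poissonKernel_def c w s
  have hne : s ≠ w := by
    rintro rfl
    exact (mem_ball.1 hw).ne (mem_sphere.1 hs)
  simpa [sub_eq_zero] using hne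

lemma harnackOn_poissonKernel {c s : ℂ} {r R : ℝ} (hr₀ : 0 ≤ r) (hr : r < R)
    (hs : ‖s - c‖ = R) :
    HarnackOn (2 * r / (R ^ 2 - r ^ 2) + 2 / (R - r)) (fun a => poissonKernel c a s)
      (closedBall c r) := by
  have hdist : ∀ a ∈ closedBall c r, 0 < ‖s - a‖ := fun a ha => by
    rw [norm_pos_iff, sub_ne_zero]
    rintro rfl
    exact hr.not_ge (hs ▸ mem_closedBall_iff_norm.1 ha)
  have hsq : HarnackOn (2 / (R - r)) (fun a => ‖s - a‖ * ‖s - a‖) (closedBall c r) := by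
    rw [show 2 / (R - r) = 1 / (R - r) + 1 / (R - r) by ring]
    exact (harnackOn_norm_sub hr hs.ge).mul (harnackOn_norm_sub hr hs.ge)
      (fun _ _ => norm_nonneg _) fun _ _ => norm_nonneg _
  refine ((harnackOn_sq_sub_sq_norm_sub c hr₀ hr).div hsq (fun a ha => ?_)
    fun a ha => mul_pos (hdist a ha) (hdist a ha)).congr fun a _ => ?_
  · have := mem_closedBall_iff_norm.1 ha
    exact sub_nonneg.2 (by gcongr; linarith)
  · simp [poissonKernel_def, hs, sq]

/-- The difference of the Poisson kernels at `a` and `conj a`, divided by `2 * a.im * s.im`: it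
represents the quotient `f a / a.im` for `f` harmonic and odd under conjugation. -/
def halfDiscKernel (a s : ℂ) : ℝ :=
  2 * (1 - ‖a‖ ^ 2) / (‖s - a‖ ^ 2 * ‖s - conj a‖ ^ 2)

lemma poissonKernel_sub_poissonKernel_conj {a s : ℂ} (ha : ‖a‖ < 1) (hs : ‖s‖ = 1) :
    poissonKernel 0 a s - poissonKernel 0 (conj a) s = 2 * a.im * (halfDiscKernel a s * s.im) := by
  have hne : ∀ b : ℂ, ‖b‖ < 1 → ‖s - b‖ ≠ 0 := fun b hb h => by
    rw [norm_eq_zero, sub_eq_zero] at h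
    exact hb.ne (h ▸ hs)
  have h₁ := hne a ha
  have h₂ := hne (conj a) (by simpa using ha)
  have hsq : ‖s - conj a‖ ^ 2 - ‖s - a‖ ^ 2 = 4 * a.im * s.im := by
    simp only [Complex.sq_norm, Complex.normSq_apply, Complex.sub_re, Complex.sub_im,
      Complex.conj_re, Complex.conj_im]
    ring
  simp only [poissonKernel_def, halfDiscKernel, sub_zero, hs, RCLike.norm_conj]
  field_simp
  linear_combination (1 - ‖a‖ ^ 2) * hsq

lemma continuousOn_halfDiscKernel {a : ℂ} (ha : ‖a‖ < 1) :
    ContinuousOn (halfDiscKernel a) (sphere 0 1) := by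
  refine ContinuousOn.div (by fun_prop) (by fun_prop) fun s hs => ?_
  have hne : ∀ b : ℂ, ‖b‖ < 1 → ‖s - b‖ ≠ 0 := fun b hb h => by
    rw [norm_eq_zero, sub_eq_zero] at h
    exact hb.ne (h ▸ mem_sphere_zero_iff_norm.1 hs)
  exact mul_ne_zero (pow_ne_zero _ (hne a ha)) (pow_ne_zero _ (hne _ (by simpa using ha)))

lemma harnackOn_halfDiscKernel {s : ℂ} {r : ℝ} (hr₀ : 0 ≤ r) (hr : r < 1) (hs : ‖s‖ = 1) :
    HarnackOn (2 * r / (1 - r ^ 2) + 4 / (1 - r)) (fun a => halfDiscKernel a s)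
      (closedBall 0 r) := by
  have hconj : ‖conj s‖ = 1 := by simpa using hs
  have hdist : ∀ t : ℂ, ‖t‖ = 1 → ∀ a ∈ closedBall 0 r, 0 < ‖t - a‖ := fun t ht a ha => by
    rw [norm_pos_iff, sub_ne_zero]
    rintro rfl
    exact hr.not_ge (ht ▸ mem_closedBall_zero_iff.1 ha)
  have hsq : ∀ t : ℂ, ‖t‖ = 1 →
      HarnackOn (1 / (1 - r) + 1 / (1 - r)) (fun a => ‖t - a‖ * ‖t - a‖) (closedBall 0 r) :=
    fun t ht =>
      have h := harnackOn_norm_sub (c := 0) hr (s := t) (by simp [ht])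
      h.mul h (fun _ _ => norm_nonneg _) fun _ _ => norm_nonneg _
  have hnum : ∀ a ∈ closedBall (0 : ℂ) r, 0 ≤ 1 ^ 2 - ‖a - 0‖ ^ 2 := fun a ha => by
    have := mem_closedBall_iff_norm.1 ha
    exact sub_nonneg.2 (by gcongr; linarith)
  have hquot := (harnackOn_sq_sub_sq_norm_sub 0 hr₀ hr).div
    ((hsq s hs).mul (hsq _ hconj) (fun _ _ => mul_self_nonneg _) fun _ _ => mul_self_nonneg _)
    hnum fun a ha => mul_pos (mul_self_pos.2 (hdist s hs a ha).ne')
      (mul_self_pos.2 (hdist _ hconj a ha).ne')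
  rw [show 2 * r / (1 - r ^ 2) + 4 / (1 - r) = 2 * r / (1 ^ 2 - r ^ 2) +
    (1 / (1 - r) + 1 / (1 - r) + (1 / (1 - r) + 1 / (1 - r))) by ring]
  refine (hquot.const_mul zero_le_two).congr fun a _ => ?_
  have : ‖conj s - a‖ = ‖s - conj a‖ := by
    rw [← RCLike.norm_conj, map_sub, Complex.conj_conj]
  simp only [halfDiscKernel, this, sub_zero]
  ring

end Kernels

lemma harnackOn_of_harmonicOnNhd {f : ℂ → ℝ} {c : ℂ} {r R : ℝ}
    (hf : HarmonicOnNhd f (closedBall c R)) (hf₀ : ∀ z ∈ sphere c R, 0 ≤ f z)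
    (hr₀ : 0 ≤ r) (hr : r < R) :
    HarnackOn (2 * r / (R ^ 2 - r ^ 2) + 2 / (R - r)) f (closedBall c r) := by
  have hR : 0 ≤ R := hr₀.trans hr.le
  have hmem : closedBall c r ⊆ ball c R := closedBall_subset_ball hr
  refine (HarnackOn.circleAverage (k := poissonKernel c) (w := f) (R := R) (fun s hs => ?_)
    (by rwa [abs_of_nonneg hR]) fun a ha => ?_).congr
    fun a ha => hf.circleAverage_poissonKernel_smul (hmem ha)
  · rw [abs_of_nonneg hR] at hs
    exact harnackOn_poissonKernel hr₀ hr (mem_sphere_iff_norm.1 hs)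
  · exact ((continuousOn_poissonKernel (hmem ha)).mul
      (hf.continuousOn.mono sphere_subset_closedBall)).circleIntegrable hR

lemma div_im_eq_circleAverage {f : ℂ → ℝ} (hf : HarmonicOnNhd f (closedBall 0 1))
    (hodd : ∀ z ∈ ball (0 : ℂ) 1, f (conj z) = -f z) {a : ℂ} (ha : ‖a‖ < 1) (ha' : a.im ≠ 0) :
    f a / a.im = Real.circleAverage (fun s => halfDiscKernel a s * (s.im * f s)) 0 1 := by
  have hmem : a ∈ ball (0 : ℂ) 1 := mem_ball_zero_iff.2 ha
  have hmem' : conj a ∈ ball (0 : ℂ) 1 := by simpa using ha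
  have hint : ∀ w ∈ ball (0 : ℂ) 1, CircleIntegrable (poissonKernel 0 w • f) 0 1 := fun w hw =>
    ((continuousOn_poissonKernel hw).mul
      (hf.continuousOn.mono sphere_subset_closedBall)).circleIntegrable zero_le_one
  have hdiff : Real.circleAverage (poissonKernel 0 a • f - poissonKernel 0 (conj a) • f) 0 1 =
      2 * f a := by
    rw [Real.circleAverage_sub (hint a hmem) (hint _ hmem'),
      hf.circleAverage_poissonKernel_smul hmem, hf.circleAverage_poissonKernel_smul hmem',
      hodd a hmem]
    ring
  have hkernel : Real.circleAverage (poissonKernel 0 a • f - poissonKernel 0 (conj a) • f) 0 1 =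
      Real.circleAverage (fun s => (2 * a.im) • (halfDiscKernel a s * (s.im * f s))) 0 1 := by
    refine Real.circleAverage_congr_sphere fun s hs => ?_
    have := poissonKernel_sub_poissonKernel_conj ha (s := s) (by simpa using hs)
    simp only [Pi.sub_apply, smul_eq_mul, Pi.mul_apply]
    linear_combination f s * this
  rw [hkernel, Real.circleAverage_fun_smul, smul_eq_mul] at hdiff
  rw [div_eq_iff ha']
  linarith

lemma harnackOn_div_im {f : ℂ → ℝ} (hf : HarmonicOnNhd f (closedBall 0 1))
    (hodd : ∀ z ∈ ball (0 : ℂ) 1, f (conj z) = -f z)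
    (hpos : ∀ s : ℂ, ‖s‖ = 1 → 0 ≤ s.im * f s) {r : ℝ} (hr₀ : 0 ≤ r) (hr : r < 1) :
    HarnackOn (2 * r / (1 - r ^ 2) + 4 / (1 - r)) (fun a => f a / a.im)
      {a ∈ closedBall 0 r | a.im ≠ 0} := by
  have hnorm : ∀ a ∈ closedBall (0 : ℂ) r, ‖a‖ < 1 := fun a ha =>
    (mem_closedBall_zero_iff.1 ha).trans_lt hr
  refine (HarnackOn.circleAverage (k := halfDiscKernel) (w := fun s => s.im * f s) (c := 0) (R := 1)
    (fun s hs => ?_) (fun s hs => ?_) fun a ha => ?_).congr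
    fun a ha => (div_im_eq_circleAverage hf hodd (hnorm a ha.1) ha.2).symm
  · exact (harnackOn_halfDiscKernel hr₀ hr (by simpa using hs)).mono (sep_subset _ _)
  · exact hpos s (by simpa using hs)
  · exact ((continuousOn_halfDiscKernel (hnorm a ha.1)).mul
      (Complex.continuous_im.continuousOn.mul
        (hf.continuousOn.mono sphere_subset_closedBall))).circleIntegrable zero_le_one

/-! ### Logarithmic coordinates and reflection -/

section VertStrip

/-- The open vertical strip of half-width `r` around the imaginary axis, the domain of the
logarithmic coordinate of an annulus. -/
def vertStrip (r : ℝ) : Set ℂ := {z | |z.re| < r}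

lemma isOpen_vertStrip (r : ℝ) : IsOpen (vertStrip r) :=
  isOpen_lt (continuous_abs.comp Complex.continuous_re) continuous_const

lemma convex_vertStrip (r : ℝ) : Convex ℝ (vertStrip r) := by
  have : vertStrip r = Complex.reLm ⁻¹' (Ioo (-r) r) := by
    ext z; simp [vertStrip, abs_lt]
  rw [this]
  exact (convex_Ioo _ _).is_linear_preimage Complex.reLm.isLinear

lemma closedBall_subset_vertStrip {r d : ℝ} {z : ℂ} (hz : z ∈ vertStrip (r - d)) :
    closedBall z d ⊆ vertStrip r := by
  intro w hw
  have h : |w.re - z.re| ≤ d := by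
    simpa using (Complex.abs_re_le_norm (w - z)).trans (mem_closedBall_iff_norm.1 hw)
  have hz : |z.re| < r - d := hz
  change |w.re| < r
  linarith [abs_sub_abs_le_abs_sub w.re z.re]

lemma approximatesLinearOn_of_norm_sub_le {L : ℂ → ℂ} {S U : Set ℂ} {δ ρ : ℝ}
    (hL : DifferentiableOn ℂ L U) (hLid : ∀ t ∈ U, ‖L t - t‖ ≤ δ) (hρ : 0 < ρ)
    (hS : Convex ℝ S) (hSU : ∀ t ∈ S, closedBall t ρ ⊆ U) :
    ApproximatesLinearOn L (ContinuousLinearEquiv.refl ℂ ℂ : ℂ →L[ℂ] ℂ) S (δ / ρ).toNNReal := by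
  have hdiff : DifferentiableOn ℂ (fun t => L t - t) U := hL.sub differentiableOn_id
  refine ApproximatesLinearOn.approximatesLinearOn_iff_lipschitzOnWith.2 ?_
  refine hS.lipschitzOnWith_of_nnnorm_deriv_le (𝕜 := ℂ) (fun t ht => hdiff.differentiableAt
    (Filter.mem_of_superset (closedBall_mem_nhds t hρ) (hSU t ht))) fun t ht => ?_
  have hδ : 0 ≤ δ := (norm_nonneg _).trans (hLid t (hSU t ht (mem_closedBall_self hρ.le)))
  rw [← NNReal.coe_le_coe, coe_nnnorm, Real.coe_toNNReal _ (by positivity)]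
  exact Complex.norm_deriv_le_of_forall_mem_sphere_norm_le hρ
    ((hdiff.mono (hSU t ht)).diffContOnCl_ball subset_rfl)
    fun z hz => hLid z (hSU t ht (sphere_subset_closedBall hz))

lemma deriv_ne_zero_of_approximatesLinearOn {L : ℂ → ℂ} {S : Set ℂ} {c : NNReal} {t : ℂ}
    (hL : ApproximatesLinearOn L (ContinuousLinearEquiv.refl ℂ ℂ : ℂ →L[ℂ] ℂ) S c) (hc : c < 1)
    (hS : S ∈ 𝓝 t) (hd : DifferentiableAt ℂ L t) : deriv L t ≠ 0 := by
  intro h₀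
  have hle := norm_deriv_le_of_lipschitzOn hS hL.lipschitzOnWith
  have hderiv : deriv (L - ⇑(ContinuousLinearEquiv.refl ℂ ℂ : ℂ →L[ℂ] ℂ)) t = -1 := by
    rw [deriv_sub hd (by fun_prop), h₀]
    simp
  rw [hderiv, norm_neg, norm_one] at hle
  exact hc.not_ge hle

lemma exists_openPartialHomeomorph_vertStrip {L : ℂ → ℂ}
    (hL : DifferentiableOn ℂ L (vertStrip 1)) (hLid : ∀ t ∈ vertStrip 1, ‖L t - t‖ ≤ 1 / 16) :
    ∃ Φ : OpenPartialHomeomorph ℂ ℂ, ⇑Φ = L ∧ Φ.source = vertStrip (1 / 2) ∧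
      vertStrip (1 / 4) ⊆ Φ.target ∧ DifferentiableOn ℂ Φ.symm Φ.target := by
  have hsub : ∀ t ∈ vertStrip (1 / 2), closedBall t (1 / 2) ⊆ vertStrip 1 := fun t ht =>
    closedBall_subset_vertStrip (by norm_num; exact ht)
  have happ := approximatesLinearOn_of_norm_sub_le hL hLid (by norm_num)
    (convex_vertStrip _) hsub
  set c : NNReal := (1 / 16 / (1 / 2) : ℝ).toNNReal with hc
  have hc' : (c : ℝ) = 1 / 8 := by rw [hc, Real.coe_toNNReal _ (by norm_num)]; norm_num
  have hN : ‖((ContinuousLinearEquiv.refl ℂ ℂ).symm : ℂ →L[ℂ] ℂ)‖₊ = 1 := by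
    simp
  have hc₁ : c < 1 := by rw [← NNReal.coe_lt_coe, hc']; norm_num
  have hcN : c < ‖((ContinuousLinearEquiv.refl ℂ ℂ).symm : ℂ →L[ℂ] ℂ)‖₊⁻¹ := by
    rwa [hN, inv_one]
  have hmem : ∀ t ∈ vertStrip (1 / 2), vertStrip 1 ∈ 𝓝 t := fun t ht =>
    Filter.mem_of_superset (closedBall_mem_nhds t (by norm_num)) (hsub t ht)
  refine ⟨happ.toOpenPartialHomeomorph L _ (Or.inr hcN) (isOpen_vertStrip _), rfl, rfl,
    fun s hs => ?_, fun s hs => ?_⟩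
  · refine happ.closedBall_subset_target (Or.inr hcN) (isOpen_vertStrip _) (b := s) (ε := 1 / 4)
      (by norm_num) (closedBall_subset_vertStrip (by norm_num; exact hs)) ?_
    have hs1 : s ∈ vertStrip 1 := lt_trans hs (by norm_num : (1 / 4 : ℝ) < 1)
    rw [hN, hc', mem_closedBall_iff_norm, norm_sub_rev]
    exact (hLid s hs1).trans (by norm_num)
  · set Φ := happ.toOpenPartialHomeomorph L _ (Or.inr hcN) (isOpen_vertStrip _)
    have ht : Φ.symm s ∈ vertStrip (1 / 2) := Φ.map_target hs
    have hd : DifferentiableAt ℂ L (Φ.symm s) := hL.differentiableAt (hmem _ ht)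
    exact (Φ.hasDerivAt_symm hs (deriv_ne_zero_of_approximatesLinearOn happ hc₁
      ((isOpen_vertStrip _).mem_nhds ht) hd) hd.hasDerivAt).differentiableAt.differentiableWithinAt

end VertStrip

section Reflection

lemma eqOn_of_eqOn_horizontal_line {S : Set ℂ} (hS : IsOpen S) (hc : IsPreconnected S)
    {f g : ℂ → ℂ} (hf : DifferentiableOn ℂ f S) (hg : DifferentiableOn ℂ g S) {p : ℂ} (hp : p ∈ S)
    (h : ∀ᶠ z in 𝓝 p, z.im = p.im → f z = g z) : EqOn f g S := by
  refine (hf.analyticOnNhd hS).eqOn_of_preconnected_of_frequently_eq (hg.analyticOnNhd hS) hc hp ?_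
  have ht : Tendsto (fun x : ℝ => p + x) (𝓝[≠] 0) (𝓝[≠] p) := by
    refine tendsto_nhdsWithin_iff.2 ⟨?_, ?_⟩
    · have : Continuous fun x : ℝ => p + x := by fun_prop
      simpa using (this.tendsto 0).mono_left nhdsWithin_le_nhds
    · filter_upwards [self_mem_nhdsWithin] with x hx
      simpa using hx
  have hev : ∀ᶠ x : ℝ in 𝓝[≠] 0, f (p + x) = g (p + x) := by
    filter_upwards [ht.eventually (nhdsWithin_le_nhds h)] with x hx
    exact hx (by simp)
  exact ht.frequently hev.frequently

variable {r : ℝ} {q : ℂ → ℂ}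

lemma conj_apply_reflection_eq (hq : DifferentiableOn ℂ q (vertStrip r)) (c : ℝ)
    (hreal : ∀ s ∈ vertStrip r, s.im = c → (q s).im = 0) {s : ℂ} (hs : s ∈ vertStrip r) :
    conj (q (conj s + (2 * c : ℝ) * Complex.I)) = q s := by
  have hdiff : DifferentiableOn ℂ (fun s => conj (q (conj s + (2 * c : ℝ) * Complex.I)))
      (vertStrip r) := by
    intro s hs
    have hmem : conj s + (2 * c : ℝ) * Complex.I ∈ vertStrip r := by simpa [vertStrip] using hs
    have hd : DifferentiableAt ℂ (fun z => q (z + (2 * c : ℝ) * Complex.I)) (conj s) :=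
      (hq.differentiableAt ((isOpen_vertStrip r).mem_nhds hmem)).comp (conj s)
        (f := fun z => z + (2 * c : ℝ) * Complex.I) (by fun_prop)
    exact (differentiableAt_conj_conj_iff.2 hd).differentiableWithinAt
  have hmem₀ : (c * Complex.I : ℂ) ∈ vertStrip r := by
    simpa [vertStrip] using (abs_nonneg _).trans_lt hs
  refine eqOn_of_eqOn_horizontal_line (isOpen_vertStrip r) (convex_vertStrip r).isPreconnected
    hdiff hq hmem₀ (eventually_of_mem ((isOpen_vertStrip r).mem_nhds hmem₀) fun z hz hzc => ?_) hs
  have hz₁ : z.im = c := by simpa using hzc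
  have hfix : conj z + (2 * c : ℝ) * Complex.I = z := by
    apply Complex.ext
    · simp
    · simp only [Complex.add_im, Complex.conj_im, Complex.im_ofReal_mul, Complex.I_im, hz₁]
      ring
  simp only [hfix]
  exact Complex.conj_eq_iff_im.2 (hreal z hz hz₁)

/- Composing the reflections in the lines `im s = 0` and `im s = π` gives the translation by
`2πi`. -/
lemma eq_of_exp_eq_exp (hq : DifferentiableOn ℂ q (vertStrip r))
    (hreal : ∀ s ∈ vertStrip r, (Complex.exp s).im = 0 → (q s).im = 0) {s t : ℂ}
    (hs : s ∈ vertStrip r) (h : Complex.exp s = Complex.exp t) : q s = q t := by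
  have hper : ∀ s ∈ vertStrip r, q (s + 2 * Real.pi * Complex.I) = q s := fun s hs => by
    have hs' : conj s ∈ vertStrip r := by simpa [vertStrip] using hs
    have h₀ := conj_apply_reflection_eq hq 0
      (fun z hz hz₀ => hreal z hz (by simp [Complex.exp_im, hz₀])) hs'
    have hπ := conj_apply_reflection_eq hq Real.pi
      (fun z hz hz₀ => hreal z hz (by simp [Complex.exp_im, hz₀])) hs'
    simpa using congrArg conj (hπ.trans h₀.symm)
  obtain ⟨n, hn⟩ := Complex.exp_eq_exp_iff_exists_int.1 h.symm
  have hper' : Function.Periodic (fun m : ℤ => q (s + m * (2 * Real.pi * Complex.I))) 1 := by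
    intro m
    have hmem : s + m * (2 * Real.pi * Complex.I) ∈ vertStrip r := by
      simpa [vertStrip] using hs
    refine Eq.trans ?_ (hper _ hmem)
    push_cast
    ring_nf
  have := hper'.int_mul_eq n
  simp only [Int.cast_id, mul_one, Int.cast_zero, zero_mul, add_zero] at this
  rw [hn, this]

end Reflection

/-! ### Residue integrals -/

section CircleIntegral

variable {c : ℂ} {R : ℝ} {U : Set ℂ}

lemma circleIntegrable_logDeriv (hR : 0 ≤ R) (hU : IsOpen U) (hsub : sphere c R ⊆ U) {f : ℂ → ℂ}
    (hf : DifferentiableOn ℂ f U) (hne : ∀ z ∈ sphere c R, f z ≠ 0) :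
    CircleIntegrable (logDeriv f) c R :=
  (((hf.deriv hU).continuousOn.mono hsub).div (hf.continuousOn.mono hsub) hne).circleIntegrable hR

lemma circleIntegral_logDeriv_eq_of_norm_sub_lt (hR : 0 ≤ R) (hU : IsOpen U)
    (hsub : sphere c R ⊆ U) {f p : ℂ → ℂ} (hf : DifferentiableOn ℂ f U)
    (hp : DifferentiableOn ℂ p U) (hlt : ∀ z ∈ sphere c R, ‖f z - p z‖ < ‖p z‖) :
    (∮ z in C(c, R), logDeriv f z) = ∮ z in C(c, R), logDeriv p z := by
  have hp₀ : ∀ z ∈ sphere c R, p z ≠ 0 := fun z hz =>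
    norm_pos_iff.1 ((norm_nonneg _).trans_lt (hlt z hz))
  have hslit : ∀ z ∈ sphere c R, f z / p z ∈ Complex.slitPlane := fun z hz => by
    have hdiv : f z / p z = 1 + (f z - p z) / p z := by
      rw [sub_div, div_self (hp₀ z hz), add_sub_cancel]
    rw [hdiv]
    refine Complex.mem_slitPlane_of_norm_lt_one ?_
    rw [norm_div, div_lt_one (norm_pos_iff.2 (hp₀ z hz))]
    exact hlt z hz
  have hf₀ : ∀ z ∈ sphere c R, f z ≠ 0 := fun z hz hfz => by
    simpa [hfz] using hslit z hz
  rw [← sub_eq_zero, ← circleIntegral.integral_sub (circleIntegrable_logDeriv hR hU hsub hf hf₀)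
    (circleIntegrable_logDeriv hR hU hsub hp hp₀)]
  refine circleIntegral.integral_eq_zero_of_hasDerivWithinAt hR
    (f := fun z => Complex.log (f z / p z)) fun z hz => ?_
  have hfz := hf.differentiableAt (hU.mem_nhds (hsub hz))
  have hpz := hp.differentiableAt (hU.mem_nhds (hsub hz))
  have hd := (hfz.hasDerivAt.div hpz.hasDerivAt (hp₀ z hz)).clog (hslit z hz)
  refine (hd.congr_deriv ?_).hasDerivWithinAt
  have h₁ := hf₀ z hz
  have h₂ := hp₀ z hz
  simp only [logDeriv_apply, Pi.div_apply]
  field_simp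

lemma circleIntegral_logDeriv_pow (hR : 0 < R) (k : ℕ) :
    (∮ z in C(0, R), logDeriv (fun z : ℂ => z ^ k) z) = 2 * Real.pi * Complex.I * k := by
  have hlog : (logDeriv fun z : ℂ => z ^ k) = fun z => (k : ℂ) * (z - 0)⁻¹ := by
    ext z
    rw [logDeriv_fun_pow differentiableAt_id k, logDeriv_id', sub_zero, one_div]
  rw [hlog, circleIntegral.integral_const_mul, circleIntegral.integral_sub_center_inv _ hR.ne',
    mul_comm]

lemma norm_div_sub_sub_div_sub_sub_le {a w ζ ζ₀ : ℂ} {M δ : ℝ} (ha : ‖a‖ ≤ M) (hδ : 0 < δ)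
    (hζ : δ ≤ ‖w - ζ‖) (hζ₀ : δ ≤ ‖w - ζ₀‖) :
    ‖a / (w - ζ) - a / (w - ζ₀) - (ζ - ζ₀) * (a / (w - ζ₀) ^ 2)‖ ≤
      M / δ ^ 3 * ‖ζ - ζ₀‖ ^ 2 := by
  have h : w - ζ ≠ 0 := norm_pos_iff.1 (hδ.trans_le hζ)
  have h₀ : w - ζ₀ ≠ 0 := norm_pos_iff.1 (hδ.trans_le hζ₀)
  have hM : 0 ≤ M := (norm_nonneg a).trans ha
  have heq : a / (w - ζ) - a / (w - ζ₀) - (ζ - ζ₀) * (a / (w - ζ₀) ^ 2) =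
      a / ((w - ζ) * (w - ζ₀) ^ 2) * (ζ - ζ₀) ^ 2 := by
    field_simp
    ring
  have hδ₃ : δ ^ 3 ≤ ‖w - ζ‖ * ‖w - ζ₀‖ ^ 2 := by
    rw [pow_succ' δ 2]
    gcongr
  rw [heq, norm_mul, norm_div, norm_mul, norm_pow, norm_pow]
  gcongr

lemma hasDerivAt_circleIntegral_div_sub (hR : 0 ≤ R) {φ g : ℂ → ℂ}
    (hφ : ContinuousOn φ (sphere c R)) (hg : ContinuousOn g (sphere c R)) {ζ₀ : ℂ} {δ : ℝ}
    (hδ : 0 < δ) (hgδ : ∀ z ∈ sphere c R, 2 * δ ≤ ‖g z - ζ₀‖) :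
    HasDerivAt (fun ζ => ∮ z in C(c, R), φ z / (g z - ζ))
      (∮ z in C(c, R), φ z / (g z - ζ₀) ^ 2) ζ₀ := by
  obtain ⟨M, hM⟩ := (isCompact_sphere c R).exists_bound_of_continuousOn hφ
  have hfar : ∀ ζ ∈ ball ζ₀ δ, ∀ z ∈ sphere c R, δ ≤ ‖g z - ζ‖ := fun ζ hζ z hz => by
    have := norm_sub_le_norm_sub_add_norm_sub (g z) ζ ζ₀
    linarith [hgδ z hz, mem_ball_iff_norm.1 hζ]
  have hne : ∀ ζ ∈ ball ζ₀ δ, ∀ z ∈ sphere c R, g z - ζ ≠ 0 := fun ζ hζ z hz =>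
    norm_pos_iff.1 (hδ.trans_le (hfar ζ hζ z hz))
  have hζ₀ := mem_ball_self (x := ζ₀) hδ
  have hint : ∀ ζ ∈ ball ζ₀ δ, CircleIntegrable (fun z => φ z / (g z - ζ)) c R := fun ζ hζ =>
    (hφ.div (hg.sub continuousOn_const) (hne ζ hζ)).circleIntegrable hR
  have hint₂ : CircleIntegrable (fun z => (φ z / (g z - ζ₀) ^ 2)) c R :=
    (hφ.div ((hg.sub continuousOn_const).pow 2) fun z hz =>
      pow_ne_zero 2 (hne ζ₀ hζ₀ z hz)).circleIntegrable hR
  have hquad : ∀ ζ ∈ ball ζ₀ δ, ‖(∮ z in C(c, R), φ z / (g z - ζ)) -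
      (∮ z in C(c, R), φ z / (g z - ζ₀)) - (ζ - ζ₀) • ∮ z in C(c, R), φ z / (g z - ζ₀) ^ 2‖ ≤
      2 * Real.pi * R * (M / δ ^ 3) * ‖‖ζ - ζ₀‖ ^ 2‖ := fun ζ hζ => by
    have hsub : CircleIntegrable (fun z => φ z / (g z - ζ) - φ z / (g z - ζ₀)) c R :=
      (hint ζ hζ).sub (hint ζ₀ hζ₀)
    rw [← circleIntegral.integral_sub (hint ζ hζ) (hint ζ₀ hζ₀), ← circleIntegral.integral_smul,
      ← circleIntegral.integral_sub hsub hint₂.const_fun_smul, mul_assoc, norm_pow,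
      norm_norm]
    exact circleIntegral.norm_integral_le_of_norm_le_const hR fun z hz =>
      norm_div_sub_sub_div_sub_sub_le (hM z hz) hδ (hfar ζ hζ z hz) (hfar ζ₀ hζ₀ z hz)
  have hO := Asymptotics.IsBigO.of_bound _ (eventually_of_mem (ball_mem_nhds ζ₀ hδ) hquad)
  exact hasDerivAt_iff_isLittleO.2
    (hO.trans_isLittleO (Asymptotics.isLittleO_pow_sub_sub ζ₀ one_lt_two))

lemma exists_differentiableAt_eventuallyEq_div_sub {f g : ℂ → ℂ} {z : ℂ}
    (hf : ∀ᶠ x in 𝓝 z, DifferentiableAt ℂ f x) (hg : ∀ᶠ x in 𝓝 z, DifferentiableAt ℂ g x)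
    (hfz : f z = 0) (hg' : deriv g z ≠ 0) :
    ∃ q : ℂ → ℂ, DifferentiableAt ℂ q z ∧ q z = deriv f z / deriv g z ∧
      ∀ᶠ x in 𝓝[≠] z, g x ≠ g z ∧ q x = f x / (g x - g z) := by
  have hdslope : ∀ {p : ℂ → ℂ}, (∀ᶠ x in 𝓝 z, DifferentiableAt ℂ p x) →
      DifferentiableAt ℂ (dslope p z) z := fun {p} hp => by
    obtain ⟨s, hs, hps⟩ := eventually_iff_exists_mem.1 hp
    exact ((Complex.differentiableOn_dslope hs).2 fun x hx =>
      (hps x hx).differentiableWithinAt).differentiableAt hs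
  have hne : dslope g z z ≠ 0 := by rwa [dslope_same]
  refine ⟨fun x => dslope f z x / dslope g z x, (hdslope hf).div (hdslope hg) hne,
    by simp only [dslope_same], ?_⟩
  filter_upwards [nhdsWithin_le_nhds ((hdslope hg).continuousAt.eventually_ne hne),
    self_mem_nhdsWithin] with x hx hxz
  have hxz' : x - z ≠ 0 := sub_ne_zero.2 hxz
  simp only [dslope_of_ne _ hxz, slope_def_field, hfz, sub_zero] at hx ⊢
  exact ⟨sub_ne_zero.1 (div_ne_zero_iff.1 hx).1, div_div_div_cancel_right₀ hxz' _ _⟩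

lemma circleIntegral_sub_mul_logDeriv_sub_eq_zero (hR : 0 ≤ R) (hU : IsOpen U)
    (hsub : closedBall c R ⊆ U) {g h : ℂ → ℂ} (hg : DifferentiableOn ℂ g U)
    (hh : DifferentiableOn ℂ h U) {w b : ℂ}
    (hlev : ∀ z ∈ U, g z = w → h z = b ∧ deriv g z ≠ 0) (hne : ∀ z ∈ sphere c R, g z ≠ w) :
    (∮ z in C(c, R), (h z - b) * logDeriv (fun x => g x - w) z) = 0 := by
  classical
  set F : ℂ → ℂ := fun z =>
    if g z = w then deriv h z else (h z - b) * logDeriv (fun x => g x - w) z with hF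
  have hFd : ∀ z ∈ U, DifferentiableAt ℂ F z := fun z hz => by
    have hgz := hg.eventually_differentiableAt (hU.mem_nhds hz)
    have hhz := hh.eventually_differentiableAt (hU.mem_nhds hz)
    have hg' := (hg.deriv hU).differentiableAt (hU.mem_nhds hz)
    by_cases hw : g z = w
    · obtain ⟨hb, hd⟩ := hlev z hz hw
      obtain ⟨q, hq, hqz, hqe⟩ := exists_differentiableAt_eventuallyEq_div_sub
        (f := fun x => h x - b) (hhz.mono fun x hx => hx.sub_const b) hgz (by simp [hb]) hd
      refine (hq.mul hg').congr_of_eventuallyEq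
        (eventuallyEq_nhds_of_eventuallyEq_nhdsNE ?_ ?_)
      · filter_upwards [hqe] with x ⟨hx, hqx⟩
        rw [hw] at hx hqx
        simp only [hF, if_neg hx, Pi.mul_apply, hqx, logDeriv_apply, deriv_sub_const]
        ring
      · simp only [hF, if_pos hw, Pi.mul_apply, hqz, deriv_sub_const]
        field_simp
    · have hd := (hhz.self_of_nhds.sub_const b).mul
        (hg'.div (hgz.self_of_nhds.sub_const w) (sub_ne_zero.2 hw))
      refine hd.congr_of_eventuallyEq ?_
      filter_upwards [hgz.self_of_nhds.continuousAt.eventually_ne hw] with x hx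
      simp [hF, hx, logDeriv_apply]
  refine Eq.trans (circleIntegral.integral_congr hR fun z hz => by simp [hF, hne z hz])
    (Complex.circleIntegral_eq_zero_of_differentiable_on_off_countable hR countable_empty
      (fun z hz => (hFd z (hsub hz)).continuousAt.continuousWithinAt)
      fun z hz => hFd z (hsub (ball_subset_closedBall hz.1)))

end CircleIntegral

/-! ### Holomorphic functions close to a power -/

section NearPower

variable {k : ℕ} {g h : ℂ → ℂ}

lemma abs_log_le_of_abs_sub_one_lt {x : ℝ} (hx : |x - 1| < 1 / 10) : |Real.log x| ≤ 1 / 9 := by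
  rw [abs_lt] at hx
  have hx₀ : 0 < x := by linarith
  have hinv : x⁻¹ ≤ 10 / 9 := inv_le_of_inv_le₀ (by norm_num) (by norm_num; linarith)
  rw [abs_le]
  constructor
  · linarith [Real.one_sub_inv_le_log_of_pos hx₀]
  · linarith [Real.log_le_sub_one_of_pos hx₀]

lemma exp_div_mem_ball (hk : 0 < k) {τ : ℂ} (hτ : τ ∈ vertStrip 1) :
    Complex.exp (τ / k) ∈ ball (0 : ℂ) 3 := by
  have hk₁ : (1 : ℝ) ≤ k := by exact_mod_cast hk
  have hre : (τ / k).re ≤ 1 := by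
    rw [Complex.div_natCast_re, div_le_one (by positivity)]
    exact (abs_lt.1 hτ).2.le.trans hk₁
  rw [mem_ball_zero_iff, Complex.norm_exp]
  exact (Real.exp_le_exp.2 hre).trans_lt (Real.exp_one_lt_three)

lemma exists_log_coordinate (hk : 0 < k) (hg : DifferentiableOn ℂ g (ball 0 3))
    (hgk : ∀ z ∈ ball (0 : ℂ) 3, ‖g z - z ^ k‖ ≤ 1 / 100) :
    ∃ L : ℂ → ℂ, DifferentiableOn ℂ L (vertStrip 1) ∧ (∀ τ ∈ vertStrip 1, ‖L τ - τ‖ ≤ 1 / 16) ∧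
      ∀ τ ∈ vertStrip 1, g (Complex.exp (τ / k)) = Complex.exp (L τ) := by
  have hpow : ∀ τ : ℂ, Complex.exp (τ / k) ^ k = Complex.exp τ := fun τ => by
    rw [← Complex.exp_nat_mul, mul_div_cancel₀ _ (Nat.cast_ne_zero.2 hk.ne')]
  set q : ℂ → ℂ := fun τ => (g (Complex.exp (τ / k)) - Complex.exp τ) * Complex.exp (-τ) with hq
  have hqn : ∀ τ ∈ vertStrip 1, ‖q τ‖ ≤ 3 / 100 := fun τ hτ => by
    have hexp : ‖Complex.exp (-τ)‖ ≤ 3 := by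
      rw [Complex.norm_exp, Complex.neg_re]
      exact (Real.exp_le_exp.2 (neg_le.1 (abs_lt.1 hτ).1.le)).trans Real.exp_one_lt_three.le
    have hg' := hgk _ (exp_div_mem_ball hk hτ)
    rw [hpow] at hg'
    rw [hq, norm_mul]
    exact (mul_le_mul hg' hexp (norm_nonneg _) (by norm_num)).trans (by norm_num)
  have hslit : ∀ τ ∈ vertStrip 1, 1 + q τ ∈ Complex.slitPlane := fun τ hτ =>
    Complex.mem_slitPlane_of_norm_lt_one ((hqn τ hτ).trans_lt (by norm_num))
  have hqd : DifferentiableOn ℂ q (vertStrip 1) :=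
    ((hg.comp (by fun_prop) fun τ hτ => exp_div_mem_ball hk hτ).sub (by fun_prop)).mul
      (by fun_prop)
  refine ⟨fun τ => τ + Complex.log (1 + q τ),
    differentiableOn_id.add (((differentiableOn_const 1).add hqd).clog hslit), ?_, ?_⟩
  · intro τ hτ
    have hlog := Complex.norm_log_one_add_half_le_self ((hqn τ hτ).trans (by norm_num))
    rw [add_sub_cancel_left]
    linarith [hqn τ hτ]
  · intro τ hτ
    have hexp : Complex.exp τ * Complex.exp (-τ) = 1 := by rw [← Complex.exp_add]; simp
    rw [Complex.exp_add, Complex.exp_log (Complex.slitPlane_ne_zero (hslit τ hτ)), hq]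
    linear_combination -(g (Complex.exp (τ / k)) - Complex.exp τ) * hexp

lemma exists_exp_parametrization (hk : 0 < k) (hg : DifferentiableOn ℂ g (ball 0 3))
    (hgk : ∀ z ∈ ball (0 : ℂ) 3, ‖g z - z ^ k‖ ≤ 1 / 100) :
    ∃ ψ : ℂ → ℂ, DifferentiableOn ℂ ψ (vertStrip (1 / 4)) ∧
      MapsTo ψ (vertStrip (1 / 4)) (ball 0 3) ∧
      (∀ s ∈ vertStrip (1 / 4), g (ψ s) = Complex.exp s) ∧
      ∀ z, |‖z‖ ^ k - 1| < 1 / 10 → ∃ s ∈ vertStrip (1 / 4), ψ s = z := by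
  obtain ⟨L, hL, hLid, hgL⟩ := exists_log_coordinate hk hg hgk
  obtain ⟨Φ, rfl, hsource, htarget, hsymm⟩ := exists_openPartialHomeomorph_vertStrip hL hLid
  have hmaps : ∀ s ∈ vertStrip (1 / 4), Φ.symm s ∈ vertStrip 1 := fun s hs => by
    have : Φ.symm s ∈ vertStrip (1 / 2) := hsource ▸ Φ.map_target (htarget hs)
    exact lt_trans this (by norm_num : (1 / 2 : ℝ) < 1)
  refine ⟨fun s => Complex.exp (Φ.symm s / k), ((hsymm.mono htarget).div_const _).cexp,
    fun s hs => exp_div_mem_ball hk (hmaps s hs), fun s hs => ?_, fun z hz => ?_⟩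
  · rw [hgL _ (hmaps s hs), Φ.right_inv (htarget hs)]
  · have hz₀ : z ≠ 0 := by
      rintro rfl
      norm_num [hk.ne'] at hz
    set τ : ℂ := k * Complex.log z with hτ
    have hτ₁ : |τ.re| ≤ 1 / 9 := by
      have hτre : τ.re = Real.log (‖z‖ ^ k) := by
        rw [hτ, Real.log_pow, ← Complex.log_re, ← Complex.re_ofReal_mul]
        simp
      exact hτre ▸ abs_log_le_of_abs_sub_one_lt hz
    have hτL : Φ τ ∈ vertStrip (1 / 4) := by
      have hΦ : Φ τ ∈ closedBall τ (1 / 16) := by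
        rw [mem_closedBall_iff_norm]
        exact hLid τ (hτ₁.trans_lt (by norm_num))
      exact closedBall_subset_vertStrip (hτ₁.trans_lt (by norm_num)) hΦ
    refine ⟨Φ τ, hτL, ?_⟩
    have hsrc : τ ∈ Φ.source := hsource ▸ hτ₁.trans_lt (by norm_num)
    simp only [Φ.left_inv hsrc]
    rw [hτ, mul_div_cancel_left₀ _ (Nat.cast_ne_zero.2 hk.ne'), Complex.exp_log hz₀]

lemma apply_eq_of_apply_eq (hk : 0 < k) (hg : DifferentiableOn ℂ g (ball 0 3))
    (hgk : ∀ z ∈ ball (0 : ℂ) 3, ‖g z - z ^ k‖ ≤ 1 / 100) (hh : DifferentiableOn ℂ h (ball 0 3))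
    (hreal : ∀ z ∈ ball (0 : ℂ) 3, (g z).im = 0 → (h z).im = 0) {z w : ℂ}
    (hz : |‖z‖ ^ k - 1| < 1 / 10) (hw : |‖w‖ ^ k - 1| < 1 / 10) (hzw : g z = g w) :
    h z = h w := by
  obtain ⟨ψ, hψ, hmaps, hgψ, hsurj⟩ := exists_exp_parametrization hk hg hgk
  obtain ⟨s, hs, rfl⟩ := hsurj z hz
  obtain ⟨t, ht, rfl⟩ := hsurj w hw
  refine eq_of_exp_eq_exp (hh.comp hψ hmaps) (fun s hs him => ?_)
    hs (by rw [← hgψ s hs, ← hgψ t ht, hzw])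
  exact hreal _ (hmaps hs) (by rw [hgψ s hs, him])

lemma exists_apply_eq_of_near_pow (hk : 0 < k) (hg : DifferentiableOn ℂ g (ball 0 3))
    (hgk : ∀ z ∈ ball (0 : ℂ) 3, ‖g z - z ^ k‖ ≤ 1 / 100) {ζ : ℂ} (hζ : |‖ζ‖ - 1| < 1 / 50) :
    ∃ z ∈ ball (0 : ℂ) 3, |‖z‖ ^ k - 1| < 1 / 20 ∧ g z = ζ := by
  obtain ⟨ψ, -, hmaps, hgψ, -⟩ := exists_exp_parametrization hk hg hgk
  have hζ₀ : ζ ≠ 0 := by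
    rintro rfl
    norm_num at hζ
  have hlog : Complex.log ζ ∈ vertStrip (1 / 4) := by
    refine lt_of_le_of_lt ?_ (by norm_num : (1 / 9 : ℝ) < 1 / 4)
    rw [Complex.log_re]
    exact abs_log_le_of_abs_sub_one_lt (hζ.trans (by norm_num))
  have hgζ : g (ψ (Complex.log ζ)) = ζ := by rw [hgψ _ hlog, Complex.exp_log hζ₀]
  refine ⟨_, hmaps hlog, ?_, hgζ⟩
  have hnear := (abs_norm_sub_norm_le _ _).trans (hgk _ (hmaps hlog))
  rw [hgζ, norm_pow] at hnear
  rw [abs_lt] at hζ ⊢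
  rw [abs_le] at hnear
  constructor <;> linarith

lemma deriv_ne_zero_of_near_pow (hk : 0 < k) (hg : DifferentiableOn ℂ g (ball 0 3))
    (hgk : ∀ z ∈ ball (0 : ℂ) 3, ‖g z - z ^ k‖ ≤ 1 / 100) {z : ℂ} (hz : |‖z‖ ^ k - 1| < 1 / 10) :
    deriv g z ≠ 0 := by
  obtain ⟨ψ, hψ, hmaps, hgψ, hsurj⟩ := exists_exp_parametrization hk hg hgk
  obtain ⟨s, hs, rfl⟩ := hsurj z hz
  have hψs := hψ.hasDerivAt ((isOpen_vertStrip _).mem_nhds hs)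
  have hcomp := (hg.hasDerivAt (isOpen_ball.mem_nhds (hmaps hs))).comp s hψs
  have hexp : HasDerivAt (g ∘ ψ) (Complex.exp s) s :=
    (Complex.hasDerivAt_exp s).congr_of_eventuallyEq
      (eventually_of_mem ((isOpen_vertStrip _).mem_nhds hs) hgψ)
  intro hzero
  rw [hzero, zero_mul] at hcomp
  exact Complex.exp_ne_zero s (hexp.unique hcomp)

lemma circleIntegral_logDeriv_sub_of_near_pow (hk : 0 < k) (hg : DifferentiableOn ℂ g (ball 0 3))
    (hgk : ∀ z ∈ ball (0 : ℂ) 3, ‖g z - z ^ k‖ ≤ 1 / 100) {ζ : ℂ} (hζ : ‖ζ‖ < 3 / 2) :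
    (∮ z in C(0, 2), logDeriv (fun x => g x - ζ) z) = 2 * Real.pi * Complex.I * k := by
  have hsub : sphere (0 : ℂ) 2 ⊆ ball 0 3 := sphere_subset_ball (by norm_num)
  rw [circleIntegral_logDeriv_eq_of_norm_sub_lt zero_le_two isOpen_ball hsub (hg.sub_const ζ)
    (p := fun z => z ^ k) (by fun_prop) fun z hz => ?_, circleIntegral_logDeriv_pow zero_lt_two]
  have hpow : (2 : ℝ) ≤ ‖z ^ k‖ := by
    rw [norm_pow, mem_sphere_zero_iff_norm.1 hz]
    exact le_self_pow₀ one_le_two hk.ne'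
  rw [sub_right_comm]
  linarith [norm_sub_le (g z - z ^ k) ζ, hgk z (hsub hz)]

lemma abs_norm_pow_sub_one_lt_of_apply_eq
    (hgk : ∀ z ∈ ball (0 : ℂ) 3, ‖g z - z ^ k‖ ≤ 1 / 100) {z w : ℂ} (hz : z ∈ ball (0 : ℂ) 3)
    (hw : w ∈ ball (0 : ℂ) 3) (hzw : g z = g w) (hw₁ : |‖w‖ ^ k - 1| < 1 / 20) :
    |‖z‖ ^ k - 1| < 1 / 10 := by
  have hz' := (abs_norm_sub_norm_le _ _).trans (hgk z hz)
  have hw' := (abs_norm_sub_norm_le _ _).trans (hgk w hw)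
  rw [hzw] at hz'
  rw [norm_pow, abs_le] at hz' hw'
  rw [abs_lt] at hw₁ ⊢
  constructor <;> linarith

lemma mem_ball_of_norm_pow_lt (hk : 0 < k) {z : ℂ} (hz : ‖z‖ ^ k < 21 / 20) :
    z ∈ ball (0 : ℂ) 2 := by
  rw [mem_ball_zero_iff]
  by_contra! hle
  have := hle.trans (le_self_pow₀ (one_le_two.trans hle) hk.ne')
  linarith

lemma norm_apply_lt_of_norm_pow_lt (hgk : ∀ z ∈ ball (0 : ℂ) 3, ‖g z - z ^ k‖ ≤ 1 / 100) {z : ℂ}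
    (hz : z ∈ ball (0 : ℂ) 3) {r : ℝ} (hzr : ‖z‖ ^ k < r) : ‖g z‖ < r + 1 / 100 := by
  rw [← norm_pow] at hzr
  linarith [norm_le_norm_add_norm_sub' (g z) (z ^ k), hgk z hz]

lemma le_norm_apply_of_mem_sphere (hk : 0 < k)
    (hgk : ∀ z ∈ ball (0 : ℂ) 3, ‖g z - z ^ k‖ ≤ 1 / 100) {z : ℂ} (hz : z ∈ sphere (0 : ℂ) 2) :
    19 / 10 ≤ ‖g z‖ := by
  have hpow : (2 : ℝ) ≤ ‖z ^ k‖ := by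
    rw [norm_pow, mem_sphere_zero_iff_norm.1 hz]
    exact le_self_pow₀ one_le_two hk.ne'
  linarith [norm_le_norm_add_norm_sub (g z) (z ^ k),
    hgk z (sphere_subset_ball (by norm_num) hz)]

/-- The average of `h` over the `k` points of the fibre of `g` over `ζ`, counted with multiplicity,
for `g` close to `z ^ k` on `ball 0 3`; the residue formula makes it holomorphic in `ζ`. -/
def fiberAverage (k : ℕ) (g h : ℂ → ℂ) (ζ : ℂ) : ℂ :=
  (2 * Real.pi * Complex.I * k)⁻¹ * ∮ z in C(0, 2), h z * logDeriv (fun x => g x - ζ) z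

lemma differentiableOn_fiberAverage (hk : 0 < k) (hg : DifferentiableOn ℂ g (ball 0 3))
    (hgk : ∀ z ∈ ball (0 : ℂ) 3, ‖g z - z ^ k‖ ≤ 1 / 100) (hh : DifferentiableOn ℂ h (ball 0 3)) :
    DifferentiableOn ℂ (fiberAverage k g h) (ball 0 (3 / 2)) := by
  have hsub : sphere (0 : ℂ) 2 ⊆ ball 0 3 := sphere_subset_ball (by norm_num)
  intro ζ hζ
  have hd := hasDerivAt_circleIntegral_div_sub (φ := fun z => h z * deriv g z) zero_le_two
    ((hh.continuousOn.mul (hg.deriv isOpen_ball).continuousOn).mono hsub)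
    (hg.continuousOn.mono hsub) (ζ₀ := ζ) (δ := 1 / 5) (by norm_num) fun z hz => by
      have := norm_sub_norm_le (g z) ζ
      linarith [le_norm_apply_of_mem_sphere hk hgk hz, mem_ball_zero_iff.1 hζ]
  refine DifferentiableAt.differentiableWithinAt (DifferentiableAt.const_mul ?_ _)
  simpa only [logDeriv_apply, deriv_sub_const, mul_div_assoc] using hd.differentiableAt

lemma fiberAverage_apply_of_abs_norm_pow_sub_one_lt (hk : 0 < k)
    (hg : DifferentiableOn ℂ g (ball 0 3))
    (hgk : ∀ z ∈ ball (0 : ℂ) 3, ‖g z - z ^ k‖ ≤ 1 / 100) (hh : DifferentiableOn ℂ h (ball 0 3))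
    (hreal : ∀ z ∈ ball (0 : ℂ) 3, (g z).im = 0 → (h z).im = 0) {w : ℂ}
    (hw : |‖w‖ ^ k - 1| < 1 / 20) : fiberAverage k g h (g w) = h w := by
  have hw₃ : w ∈ ball (0 : ℂ) 3 := ball_subset_ball (by norm_num)
    (mem_ball_of_norm_pow_lt hk (by linarith [(abs_lt.1 hw).2]))
  have hgw : ‖g w‖ < 3 / 2 :=
    (norm_apply_lt_of_norm_pow_lt hgk hw₃ (by linarith [(abs_lt.1 hw).2] :
      ‖w‖ ^ k < 21 / 20)).trans (by norm_num)
  have hsub : closedBall (0 : ℂ) 2 ⊆ ball 0 3 := closedBall_subset_ball (by norm_num)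
  have hne : ∀ z ∈ sphere (0 : ℂ) 2, g z ≠ g w := fun z hz hzw => by
    have := le_norm_apply_of_mem_sphere hk hgk hz
    rw [hzw] at this
    linarith
  have hzero := circleIntegral_sub_mul_logDeriv_sub_eq_zero zero_le_two isOpen_ball hsub hg hh
    (w := g w) (b := h w) (fun z hz hzw => by
      have hz₁ := abs_norm_pow_sub_one_lt_of_apply_eq hgk hz hw₃ hzw hw
      exact ⟨apply_eq_of_apply_eq hk hg hgk hh hreal hz₁ (hw.trans (by norm_num)) hzw,
        deriv_ne_zero_of_near_pow hk hg hgk hz₁⟩) hne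
  have hlog : CircleIntegrable (logDeriv fun x => g x - g w) 0 2 :=
    circleIntegrable_logDeriv zero_le_two isOpen_ball (sphere_subset_closedBall.trans hsub)
      (hg.sub_const _) fun z hz => sub_ne_zero.2 (hne z hz)
  have hhlog : CircleIntegrable (fun z => h z * logDeriv (fun x => g x - g w) z) 0 2 :=
    hlog.continuousOn_mul (hh.continuousOn.mono (by
      simpa using sphere_subset_closedBall.trans hsub))
  have hk₀ : (2 * Real.pi * Complex.I * k : ℂ) ≠ 0 := by simp [Real.pi_ne_zero, hk.ne']
  simp only [sub_mul, ← smul_eq_mul (h w)] at hzero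
  rw [circleIntegral.integral_sub hhlog hlog.const_fun_smul, sub_eq_zero,
    circleIntegral.integral_smul, circleIntegral_logDeriv_sub_of_near_pow hk hg hgk hgw] at hzero
  rw [fiberAverage, hzero, smul_eq_mul, mul_comm (h w), inv_mul_cancel_left₀ hk₀]

lemma convex_setOf_norm_pow_lt (k : ℕ) (r : ℝ) : Convex ℝ {z : ℂ | ‖z‖ ^ k < r} := by
  simpa using ((convexOn_univ_norm (E := ℂ)).pow (fun _ _ => norm_nonneg _) k).convex_lt r

lemma fiberAverage_apply_of_norm_pow_lt (hk : 0 < k) (hg : DifferentiableOn ℂ g (ball 0 3))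
    (hgk : ∀ z ∈ ball (0 : ℂ) 3, ‖g z - z ^ k‖ ≤ 1 / 100) (hh : DifferentiableOn ℂ h (ball 0 3))
    (hreal : ∀ z ∈ ball (0 : ℂ) 3, (g z).im = 0 → (h z).im = 0) {z : ℂ}
    (hz : ‖z‖ ^ k < 21 / 20) : fiberAverage k g h (g z) = h z := by
  set S : Set ℂ := {z | ‖z‖ ^ k < 21 / 20} with hS
  have hSo : IsOpen S := isOpen_lt (by fun_prop) continuous_const
  have hSub : S ⊆ ball 0 3 := fun z hz =>
    ball_subset_ball (by norm_num) (mem_ball_of_norm_pow_lt hk hz)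
  have hmaps : MapsTo g S (ball 0 (3 / 2)) := fun z hz => mem_ball_zero_iff.2
    ((norm_apply_lt_of_norm_pow_lt hgk (hSub hz) hz).trans (by norm_num))
  have hd : DifferentiableOn ℂ (fun z => fiberAverage k g h (g z)) S :=
    (differentiableOn_fiberAverage hk hg hgk hh).comp (hg.mono hSub) hmaps
  have hopen : IsOpen {z : ℂ | |‖z‖ ^ k - 1| < 1 / 20} := isOpen_lt (by fun_prop) continuous_const
  refine (hd.analyticOnNhd hSo).eqOn_of_preconnected_of_eventuallyEq
    ((hh.mono hSub).analyticOnNhd hSo) (convex_setOf_norm_pow_lt k _).isPreconnected (z₀ := 1)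
    (by norm_num [hS]) ?_ hz
  filter_upwards [hopen.mem_nhds (x := 1) (by norm_num)] with w hw
  exact fiberAverage_apply_of_abs_norm_pow_sub_one_lt hk hg hgk hh hreal hw

lemma conj_fiberAverage_conj (hk : 0 < k) (hg : DifferentiableOn ℂ g (ball 0 3))
    (hgk : ∀ z ∈ ball (0 : ℂ) 3, ‖g z - z ^ k‖ ≤ 1 / 100) (hh : DifferentiableOn ℂ h (ball 0 3))
    (hreal : ∀ z ∈ ball (0 : ℂ) 3, (g z).im = 0 → (h z).im = 0) {ζ : ℂ}
    (hζ : ζ ∈ ball (0 : ℂ) (3 / 2)) :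
    conj (fiberAverage k g h (conj ζ)) = fiberAverage k g h ζ := by
  have hd := differentiableOn_fiberAverage hk hg hgk hh
  have hdconj : DifferentiableOn ℂ (fun ζ => conj (fiberAverage k g h (conj ζ)))
      (ball 0 (3 / 2)) := fun ζ hζ => by
    have hmem : conj ζ ∈ ball (0 : ℂ) (3 / 2) := by simpa using hζ
    exact (differentiableAt_conj_conj_iff.2
      (hd.differentiableAt (isOpen_ball.mem_nhds hmem))).differentiableWithinAt
  have hopen : IsOpen {ζ : ℂ | |‖ζ‖ - 1| < 1 / 50} := isOpen_lt (by fun_prop) continuous_const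
  refine eqOn_of_eqOn_horizontal_line isOpen_ball (convex_ball _ _).isPreconnected hdconj hd
    (p := 1) (by norm_num) ?_ hζ
  filter_upwards [hopen.mem_nhds (x := 1) (by norm_num)] with ζ hζ₁ him
  obtain ⟨z, hz, hz₁, rfl⟩ := exists_apply_eq_of_near_pow hk hg hgk hζ₁
  have hgz : (g z).im = 0 := him
  rw [Complex.conj_eq_iff_im.2 hgz,
    fiberAverage_apply_of_abs_norm_pow_sub_one_lt hk hg hgk hh hreal hz₁]
  exact Complex.conj_eq_iff_im.2 (hreal z hz hgz)

lemma mul_nonneg_of_sign_eq {a b : ℝ} (hab : SignType.sign a = SignType.sign b) : 0 ≤ a * b := by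
  rw [← sign_nonneg_iff (a := a * b), sign_mul, hab]
  cases SignType.sign b <;> decide

lemma div_nonneg_of_sign_eq {a b : ℝ} (hab : SignType.sign a = SignType.sign b) : 0 ≤ b / a :=
  div_nonneg_iff.2 (mul_nonneg_iff.1 (mul_nonneg_of_sign_eq hab.symm))

lemma im_eq_zero_of_sign_im_eq {S : Set ℂ}
    (hsign : ∀ z ∈ S, SignType.sign (g z).im = SignType.sign (h z).im) :
    ∀ z ∈ S, (g z).im = 0 → (h z).im = 0 := fun z hz hgz => by
  rw [← sign_eq_zero_iff, ← hsign z hz, hgz, sign_zero]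

lemma harnackOn_im_fiberAverage_div_im (hk : 0 < k) (hg : DifferentiableOn ℂ g (ball 0 3))
    (hgk : ∀ z ∈ ball (0 : ℂ) 3, ‖g z - z ^ k‖ ≤ 1 / 100) (hh : DifferentiableOn ℂ h (ball 0 3))
    (hsign : ∀ z ∈ ball (0 : ℂ) 3, SignType.sign (g z).im = SignType.sign (h z).im) :
    HarnackOn (136 / 7) (fun ζ => (fiberAverage k g h ζ).im / ζ.im)
      {ζ ∈ closedBall 0 (3 / 4) | ζ.im ≠ 0} := by
  have hreal := im_eq_zero_of_sign_im_eq hsign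
  have hd := differentiableOn_fiberAverage hk hg hgk hh
  have hharm : HarmonicOnNhd (fun ζ => (fiberAverage k g h ζ).im) (closedBall 0 1) := fun ζ hζ =>
    (hd.analyticOnNhd isOpen_ball ζ (closedBall_subset_ball (by norm_num) hζ)).harmonicAt_im
  convert harnackOn_div_im (r := 3 / 4) hharm (fun ζ hζ => ?_) (fun s hs => ?_) (by norm_num)
    (by norm_num) using 1
  · norm_num
  · rw [← conj_fiberAverage_conj hk hg hgk hh hreal (ball_subset_ball (by norm_num) hζ),
      Complex.conj_im, neg_neg]
  · obtain ⟨z, hz, hz₁, rfl⟩ := exists_apply_eq_of_near_pow hk hg hgk (ζ := s) (by simp [hs])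
    rw [fiberAverage_apply_of_abs_norm_pow_sub_one_lt hk hg hgk hh hreal hz₁]
    exact mul_nonneg_of_sign_eq (hsign z hz)

lemma lipschitzOnWith_ball_of_near_pow (hg : DifferentiableOn ℂ g (ball 0 3))
    (hgk : ∀ z ∈ ball (0 : ℂ) 3, ‖g z - z ^ k‖ ≤ 1 / 100) :
    LipschitzOnWith 3 g (ball 0 (1 / 2)) := by
  have hball : ∀ z ∈ ball (0 : ℂ) (1 / 2), closedBall z (1 / 2) ⊆ ball 0 1 := fun z hz =>
    closedBall_subset_ball' (by linarith [mem_ball.1 hz])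
  have hsub : ball (0 : ℂ) 1 ⊆ ball 0 3 := ball_subset_ball (by norm_num)
  refine (convex_ball _ _).lipschitzOnWith_of_nnnorm_deriv_le (𝕜 := ℂ) (fun z hz =>
    hg.differentiableAt (isOpen_ball.mem_nhds (ball_subset_ball (by norm_num) hz))) fun z hz => ?_
  have hderiv : ‖deriv g z‖ ≤ (101 / 100) / (1 / 2) := by
    refine Complex.norm_deriv_le_of_forall_mem_sphere_norm_le (by norm_num)
      ((hg.mono ((hball z hz).trans hsub)).diffContOnCl_ball Subset.rfl) fun w hw => ?_
    have hw₁ := hball z hz (sphere_subset_closedBall hw)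
    refine (norm_le_norm_add_norm_sub' (g w) (w ^ k)).trans ?_
    have := pow_le_one₀ (n := k) (norm_nonneg w) (mem_ball_zero_iff.1 hw₁).le
    rw [← norm_pow] at this
    linarith [hgk w (hsub hw₁)]
  rw [← NNReal.coe_le_coe, coe_nnnorm]
  exact hderiv.trans (by norm_num)

theorem harnackOn_im_div_im_of_near_pow (hk : 0 < k) (hg : DifferentiableOn ℂ g (ball 0 3))
    (hgk : ∀ z ∈ ball (0 : ℂ) 3, ‖g z - z ^ k‖ ≤ 1 / 100) (hh : DifferentiableOn ℂ h (ball 0 3))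
    (hsign : ∀ z ∈ ball (0 : ℂ) 3, SignType.sign (g z).im = SignType.sign (h z).im) :
    HarnackOn (408 / 7) (fun z => (h z).im / (g z).im) {z ∈ ball 0 (1 / 2) | (g z).im ≠ 0} := by
  have hpow : ∀ z ∈ ball (0 : ℂ) (1 / 2), ‖z‖ ^ k < 7 / 10 := fun z hz => by
    have hz' := mem_ball_zero_iff.1 hz
    have := pow_le_of_le_one (norm_nonneg z) (by linarith) hk.ne'
    linarith
  have hsub : ball (0 : ℂ) (1 / 2) ⊆ ball 0 3 := ball_subset_ball (by norm_num)
  have heq : ∀ z ∈ ball (0 : ℂ) (1 / 2), fiberAverage k g h (g z) = h z := fun z hz =>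
    fiberAverage_apply_of_norm_pow_lt hk hg hgk hh (im_eq_zero_of_sign_im_eq hsign)
      ((hpow z hz).trans (by norm_num))
  have hcomp := (harnackOn_im_fiberAverage_div_im hk hg hgk hh hsign).comp_lipschitzOnWith
    (by norm_num) ((lipschitzOnWith_ball_of_near_pow hg hgk).mono
      (sep_subset (ball 0 (1 / 2)) fun z => (g z).im ≠ 0))
    (fun z hz => ⟨mem_closedBall_zero_iff.2 ((norm_apply_lt_of_norm_pow_lt hgk (hsub hz.1)
      (hpow z hz.1)).le.trans (by norm_num)), hz.2⟩)
    fun z hz => by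
      rw [heq z hz.1]
      exact div_nonneg_of_sign_eq (hsign z (hsub hz.1))
  have hconst : (136 / 7 : ℝ) * (3 : NNReal) = 408 / 7 := by norm_num
  rw [hconst] at hcomp
  exact hcomp.congr fun z hz => by simp only [Function.comp_apply, heq z hz.1]

end NearPower

section NearImPower

lemma norm_le_of_forall_abs_im_le {f : ℂ → ℂ} {M r R : ℝ} (hM : 0 < M) (hr : r < R)
    (hf : DifferentiableOn ℂ f (ball 0 R)) (him : ∀ z ∈ ball (0 : ℂ) R, |(f z).im| ≤ M)
    (h0 : (f 0).re = 0) {z : ℂ} (hz : ‖z‖ ≤ r) : ‖f z‖ ≤ 4 * M * R / (R - r) := by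
  have hzR : ‖z‖ < R := hz.trans_lt hr
  have hR : 0 < R := (norm_nonneg z).trans_lt hzR
  have hf0 : ‖f 0‖ ≤ M := by
    rw [← Complex.abs_im_eq_norm.2 h0]
    exact him 0 (mem_ball_self hR)
  have key := Complex.borelCaratheodory (f := fun z => -Complex.I * f z) hM (hf.const_mul _)
    (fun w hw => by simpa using (abs_le.1 (him w hw)).2) hR (mem_ball_zero_iff.2 hzR)
  simp only [norm_mul, norm_neg, Complex.norm_I, one_mul] at key
  have : 0 < R - ‖z‖ := sub_pos.2 hzR
  calc ‖f z‖ ≤ (2 * M * ‖z‖ + ‖f 0‖ * (R + ‖z‖)) / (R - ‖z‖) := by rwa [add_div]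
    _ ≤ (2 * M * R + M * (R + R)) / (R - r) := by gcongr
    _ = 4 * M * R / (R - r) := by ring

lemma exists_differentiableOn_im_eq {w : ℂ → ℝ} {p : ℂ} {R : ℝ}
    (hw : HarmonicOnNhd w (ball p R)) :
    ∃ g : ℂ → ℂ, DifferentiableOn ℂ g (ball p R) ∧ EqOn (fun z => (g z).im) w (ball p R) ∧
      (g p).re = 0 := by
  obtain ⟨F, hF, hFw⟩ := hw.exists_analyticOnNhd_ball_re_eq
  refine ⟨fun z => Complex.I * (F z - (F p).im * Complex.I),
    (hF.differentiableOn.sub_const _).const_mul _, fun z hz => ?_, by simp⟩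
  simpa using hFw hz

theorem harnackOn_div_of_near_im_pow {k : ℕ} (hk : 0 < k) {u v : ℂ → ℝ}
    (hu : HarmonicOnNhd u (ball 0 4)) (hv : HarmonicOnNhd v (ball 0 4))
    (hvk : ∀ z ∈ ball (0 : ℂ) 4, |v z - (z ^ k).im| ≤ 1 / 1600)
    (hsign : ∀ z ∈ ball (0 : ℂ) 4, SignType.sign (v z) = SignType.sign (u z)) :
    HarnackOn (408 / 7) (fun z => u z / v z) {z ∈ ball 0 (1 / 2) | v z ≠ 0} := by
  obtain ⟨g, hg, hgv, hg₀⟩ := exists_differentiableOn_im_eq hv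
  obtain ⟨h, hh, hhu, -⟩ := exists_differentiableOn_im_eq hu
  have hsub : ball (0 : ℂ) 3 ⊆ ball 0 4 := ball_subset_ball (by norm_num)
  have hgk : ∀ z ∈ ball (0 : ℂ) 3, ‖g z - z ^ k‖ ≤ 1 / 100 := fun z hz =>
    (norm_le_of_forall_abs_im_le (f := fun z => g z - z ^ k) (M := 1 / 1600) (r := 3) (by norm_num)
      (by norm_num) (hg.sub (by fun_prop)) (fun w hw => by
        rw [Complex.sub_im, show (g w).im = v w from hgv hw]; exact hvk w hw)
      (by simp [hg₀, hk.ne']) (mem_ball_zero_iff.1 hz).le).trans (by norm_num)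
  have key := harnackOn_im_div_im_of_near_pow hk (hg.mono hsub) hgk (hh.mono hsub) fun z hz => by
    rw [show (g z).im = v z from hgv (hsub hz), show (h z).im = u z from hhu (hsub hz)]
    exact hsign z (hsub hz)
  have hsmall : ball (0 : ℂ) (1 / 2) ⊆ ball 0 4 := ball_subset_ball (by norm_num)
  refine (key.mono fun z hz => ?_).congr fun z hz => ?_
  · exact ⟨hz.1, by rw [show (g z).im = v z from hgv (hsmall hz.1)]; exact hz.2⟩
  · exact congrArg₂ (· / ·) (hhu (hsmall hz.1)) (hgv (hsmall hz.1))

lemma mapsTo_add_mul_ball (p : ℂ) {c : ℂ} (hc : c ≠ 0) (r : ℝ) :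
    MapsTo (fun z => p + c * z) (ball 0 r) (ball p (r * ‖c‖)) := fun z hz => by
  rw [mem_ball_iff_norm, add_sub_cancel_left, norm_mul, mul_comm]
  exact mul_lt_mul_of_pos_right (mem_ball_zero_iff.1 hz) (norm_pos_iff.2 hc)

lemma harmonicOnNhd_comp_add_mul {w : ℂ → ℝ} {p c : ℂ} {r : ℝ} (hc : c ≠ 0)
    (hw : HarmonicOnNhd w (ball p (r * ‖c‖))) :
    HarmonicOnNhd (fun z => w (p + c * z)) (ball 0 r) := by
  obtain ⟨g, hg, hgw, -⟩ := exists_differentiableOn_im_eq hw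
  have hmaps := mapsTo_add_mul_ball p hc r
  have hd : DifferentiableOn ℂ (fun z => g (p + c * z)) (ball 0 r) :=
    hg.comp (by fun_prop) hmaps
  intro z hz
  refine (harmonicAt_congr_nhds ?_).1 (hd.analyticOnNhd isOpen_ball z hz).harmonicAt_im
  filter_upwards [isOpen_ball.mem_nhds hz] with y hy using hgw (hmaps hy)

theorem harnackOn_div_of_near_im_pow_rescaled {k : ℕ} (hk : 0 < k) {u v : ℂ → ℝ} {p c : ℂ} {t : ℝ}
    (hc : c ≠ 0) (ht : 0 < t) (hu : HarmonicOnNhd u (ball p (4 * ‖c‖)))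
    (hv : HarmonicOnNhd v (ball p (4 * ‖c‖)))
    (hvk : ∀ z ∈ ball (0 : ℂ) 4, |v (p + c * z) / t - (z ^ k).im| ≤ 1 / 1600)
    (hsign : ∀ z ∈ ball p (4 * ‖c‖), SignType.sign (v z) = SignType.sign (u z)) :
    HarnackOn (408 / 7 * ‖c⁻¹‖) (fun z => u z / v z) {z ∈ ball p (‖c‖ / 2) | v z ≠ 0} := by
  have hunscale : ∀ z, p + c * (c⁻¹ * (z - p)) = z := fun z => by field_simp; ring
  have key := harnackOn_div_of_near_im_pow hk (harmonicOnNhd_comp_add_mul hc hu)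
    (v := fun z => v (p + c * z) / t)
    (by simp only [div_eq_inv_mul]; exact (harmonicOnNhd_comp_add_mul hc hv).const_smul)
    hvk fun z hz => by
      rw [div_eq_mul_inv, sign_mul, sign_pos (inv_pos.2 ht), mul_one,
        hsign _ (mapsTo_add_mul_ball p hc 4 hz)]
  have hlip : LipschitzWith ‖c⁻¹‖₊ fun z => c⁻¹ * (z - p) := LipschitzWith.of_dist_le_mul
    fun a b => by simp [dist_eq_norm, ← mul_sub]
  have hsub : ball p (‖c‖ / 2) ⊆ ball p (4 * ‖c‖) := ball_subset_ball (by linarith [norm_nonneg c])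
  refine ((key.const_mul (inv_nonneg.2 ht.le)).comp_lipschitzOnWith (by norm_num)
    hlip.lipschitzOnWith (fun z hz => ⟨?_, ?_⟩) fun z hz => ?_).congr fun z _ => ?_
  · rw [mem_ball_zero_iff, norm_mul, norm_inv, inv_mul_lt_iff₀ (norm_pos_iff.2 hc)]
    linarith [mem_ball_iff_norm.1 hz.1]
  · rw [hunscale]
    exact div_ne_zero hz.2 ht.ne'
  · rw [hunscale]
    exact mul_nonneg (inv_nonneg.2 ht.le) (by
      rw [div_div_eq_mul_div, mul_div_right_comm]
      exact mul_nonneg (div_nonneg_of_sign_eq (hsign z (hsub hz.1))) ht.le)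
  · simp only [Function.comp_apply, hunscale]
    field_simp

end NearImPower

/-! ### Quotients of harmonic functions -/

section Local

lemma exists_eventually_eq_im_pow_mul {V : ℂ → ℝ} {p : ℂ} (hV : HarmonicAt V p) (hVp : V p = 0)
    (hV₀ : ¬ V =ᶠ[𝓝 p] 0) :
    ∃ k : ℕ, 0 < k ∧ ∃ w : ℂ, w ≠ 0 ∧ ∃ ψ : ℂ → ℂ, ContinuousAt ψ p ∧ ψ p = 1 ∧
      ∀ᶠ z in 𝓝 p, V z = ((w⁻¹ * (z - p)) ^ k * ψ z).im := by
  obtain ⟨R, hR, hball⟩ := Metric.eventually_nhds_iff_ball.1 hV.eventually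
  obtain ⟨G, hG, hGV, hGp⟩ := exists_differentiableOn_im_eq hball
  have hGp₀ : G p = 0 := Complex.ext hGp ((hGV (mem_ball_self hR)).trans hVp)
  have hG₀ : ¬ ∀ᶠ z in 𝓝 p, G z = 0 := fun h => hV₀ <| by
    filter_upwards [h, ball_mem_nhds p hR] with z hz hzR
    exact (hGV hzR).symm.trans (congrArg Complex.im hz)
  obtain ⟨k, φ, hφ, hφp, hGφ⟩ := (hG.analyticAt
    (ball_mem_nhds p hR)).exists_eventuallyEq_pow_smul_nonzero_iff.2 hG₀
  have hk : k ≠ 0 := by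
    rintro rfl
    have := hGφ.self_of_nhds
    rw [hGp₀, pow_zero, one_smul] at this
    exact hφp this.symm
  obtain ⟨w, hw⟩ := IsAlgClosed.exists_pow_nat_eq (φ p)⁻¹ hk.bot_lt
  have hw₀ : w ≠ 0 := by
    rintro rfl
    rw [zero_pow hk] at hw
    exact inv_ne_zero hφp hw.symm
  refine ⟨k, hk.bot_lt, w, hw₀, fun z => (φ p)⁻¹ * φ z, by fun_prop, inv_mul_cancel₀ hφp, ?_⟩
  filter_upwards [hGφ, ball_mem_nhds p hR] with z hz hzR
  rw [← hGV hzR]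
  simp only [hz, mul_pow, inv_pow, hw, inv_inv, smul_eq_mul]
  field_simp

theorem exists_near_im_pow_rescaled {V : ℂ → ℝ} {p : ℂ} (hV : HarmonicAt V p) (hVp : V p = 0)
    (hV₀ : ¬ V =ᶠ[𝓝 p] 0) {s : Set ℂ} (hs : s ∈ 𝓝 p) {ε r : ℝ} (hε : 0 < ε) (hr : 0 < r) :
    ∃ k : ℕ, 0 < k ∧ ∃ c : ℂ, c ≠ 0 ∧ ∃ t : ℝ, 0 < t ∧ ball p (r * ‖c‖) ⊆ s ∧
      ∀ z ∈ ball (0 : ℂ) r, |V (p + c * z) / t - (z ^ k).im| ≤ ε := by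
  obtain ⟨k, hk, w, hw, ψ, hψ, hψp, hVψ⟩ := exists_eventually_eq_im_pow_mul hV hVp hV₀
  have hclose : ∀ᶠ z in 𝓝 p, ‖ψ z - 1‖ < ε / r ^ k := by
    refine ContinuousAt.eventually_lt (by fun_prop) continuousAt_const ?_
    rw [hψp, sub_self, norm_zero]
    positivity
  obtain ⟨δ, hδ, hball⟩ := Metric.eventually_nhds_iff_ball.1 ((hVψ.and hclose).and hs)
  obtain ⟨ρ, hρ, hρδ⟩ : ∃ ρ : ℝ, 0 < ρ ∧ r * ‖ρ * w‖ = δ := by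
    refine ⟨δ / (r * ‖w‖), by positivity, ?_⟩
    rw [norm_mul, Complex.norm_of_nonneg (by positivity)]
    field_simp
  have hc : (ρ * w : ℂ) ≠ 0 := mul_ne_zero (Complex.ofReal_ne_zero.2 hρ.ne') hw
  refine ⟨k, hk, ρ * w, hc, ρ ^ k, by positivity, fun y hy => (hball y (hρδ ▸ hy)).2,
    fun z hz => ?_⟩
  obtain ⟨⟨hVz, hψz⟩, -⟩ := hball _ (hρδ ▸ mapsTo_add_mul_ball p hc r hz)
  have hscale : V (p + ρ * w * z) / ρ ^ k = (z ^ k * ψ (p + ρ * w * z)).im := by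
    rw [hVz, add_sub_cancel_left, show w⁻¹ * (ρ * w * z) = ρ * z by field_simp, mul_pow, mul_assoc,
      ← Complex.ofReal_pow, Complex.im_ofReal_mul]
    field_simp
  rw [hscale, ← Complex.sub_im, ← mul_sub_one]
  calc |(z ^ k * (ψ (p + ρ * w * z) - 1)).im| ≤ ‖z‖ ^ k * ‖ψ (p + ρ * w * z) - 1‖ := by
        rw [← norm_pow, ← norm_mul]
        exact Complex.abs_im_le_norm _
    _ ≤ r ^ k * (ε / r ^ k) := by
        gcongr
        exact (mem_ball_zero_iff.1 hz).le
    _ = ε := mul_div_cancel₀ _ (by positivity)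

lemma harnackOn_div_of_forall_mul_pos {u v : ℂ → ℝ} {p : ℂ} {a R : ℝ} (hR : 0 < R)
    (hu : HarmonicOnNhd u (closedBall p R)) (hv : HarmonicOnNhd v (closedBall p R))
    (hupos : ∀ z ∈ closedBall p R, 0 < a * u z) (hvpos : ∀ z ∈ closedBall p R, 0 < a * v z) :
    HarnackOn (32 / (3 * R)) (fun z => u z / v z) (closedBall p (R / 2)) := by
  have hconst : 2 * (R / 2) / (R ^ 2 - (R / 2) ^ 2) + 2 / (R - R / 2) = 16 / (3 * R) := by
    field_simp
    norm_num
  have hharnack {w : ℂ → ℝ} (hw : HarmonicOnNhd w (closedBall p R))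
      (hwpos : ∀ z ∈ closedBall p R, 0 < a * w z) :
      HarnackOn (16 / (3 * R)) (fun z => a * w z) (closedBall p (R / 2)) :=
    hconst ▸ harnackOn_of_harmonicOnNhd (f := fun z => a * w z) hw.const_smul
      (fun z hz => (hwpos z (sphere_subset_closedBall hz)).le) (by positivity) (by linarith)
  have hsub : closedBall p (R / 2) ⊆ closedBall p R := closedBall_subset_closedBall (by linarith)
  have ha : a ≠ 0 := left_ne_zero_of_mul (hupos p (mem_closedBall_self hR.le)).ne'
  have key := ((hharnack hu hupos).div (hharnack hv hvpos) (fun z hz => (hupos z (hsub hz)).le)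
    fun z hz => hvpos z (hsub hz)).congr fun z _ => mul_div_mul_left (u z) (v z) ha
  convert key using 1
  ring

variable {ι : Type*} {l : Filter ι} {u v : ι → ℂ → ℝ} {V : ℂ → ℝ} {Ω : Set ℂ} {p : ℂ} {R : ℝ}

lemma exists_eventually_harnackOn_div_of_ne_zero (hR : 0 < R)
    (hu : ∀ i, HarmonicOnNhd (u i) (closedBall p R))
    (hv : ∀ i, HarmonicOnNhd (v i) (closedBall p R))
    (hsign : ∀ i, ∀ z ∈ closedBall p R, SignType.sign (v i z) = SignType.sign (u i z))
    (hV : ContinuousAt V p) (hVp : V p ≠ 0) (hlim : TendstoUniformlyOn v V l (closedBall p R)) :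
    ∃ N ∈ 𝓝 p, ∃ C, 0 ≤ C ∧
      ∀ᶠ i in l, HarnackOn C (fun z => u i z / v i z) {z ∈ N | v i z ≠ 0} := by
  have hVp₂ : 0 < |V p| / 2 := by positivity
  obtain ⟨r, hr, hball⟩ := Metric.nhds_basis_closedBall.eventually_iff.1
    ((Metric.tendsto_nhds.1 hV _ hVp₂).and (closedBall_mem_nhds p hR))
  have hsub : closedBall p r ⊆ closedBall p R := fun z hz => (hball hz).2
  refine ⟨closedBall p (r / 2), closedBall_mem_nhds p (half_pos hr), 32 / (3 * r), by positivity,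
    ?_⟩
  filter_upwards [Metric.tendstoUniformlyOn_iff.1 hlim _ hVp₂] with i hi
  have hvpos : ∀ z ∈ closedBall p r, 0 < V p * v i z := fun z hz => by
    have hclose : |v i z - V p| < |V p| := by
      have := dist_triangle (v i z) (V z) (V p)
      rw [← Real.dist_eq]
      linarith [dist_comm (V z) (v i z), hi z (hsub hz), (hball hz).1]
    nlinarith [sq_lt_sq.2 hclose]
  have hupos : ∀ z ∈ closedBall p r, 0 < V p * u i z := fun z hz => by
    rw [← sign_eq_one_iff, sign_mul, ← hsign i z (hsub hz), ← sign_mul, sign_pos (hvpos z hz)]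
  exact (harnackOn_div_of_forall_mul_pos hr ((hu i).mono hsub) ((hv i).mono hsub) hupos hvpos).mono
    (sep_subset _ _)

lemma exists_eventually_harnackOn_div_of_eq_zero (hR : 0 < R)
    (hu : ∀ i, HarmonicOnNhd (u i) (closedBall p R))
    (hv : ∀ i, HarmonicOnNhd (v i) (closedBall p R))
    (hsign : ∀ i, ∀ z ∈ closedBall p R, SignType.sign (v i z) = SignType.sign (u i z))
    (hV : HarmonicAt V p) (hVp : V p = 0) (hV₀ : ¬ V =ᶠ[𝓝 p] 0)
    (hlim : TendstoUniformlyOn v V l (closedBall p R)) :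
    ∃ N ∈ 𝓝 p, ∃ C, 0 ≤ C ∧
      ∀ᶠ i in l, HarnackOn C (fun z => u i z / v i z) {z ∈ N | v i z ≠ 0} := by
  obtain ⟨k, hk, c, hc, t, ht, hsub, hVk⟩ := exists_near_im_pow_rescaled hV hVp hV₀
    (closedBall_mem_nhds p hR) (by norm_num : (0 : ℝ) < 1 / 3200) (by norm_num : (0 : ℝ) < 4)
  refine ⟨ball p (‖c‖ / 2), ball_mem_nhds p (by positivity), 408 / 7 * ‖c⁻¹‖, by positivity, ?_⟩
  filter_upwards [Metric.tendstoUniformlyOn_iff.1 hlim (t / 3200) (by positivity)] with i hi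
  refine harnackOn_div_of_near_im_pow_rescaled hk hc ht ((hu i).mono hsub) ((hv i).mono hsub)
    (fun z hz => ?_) fun z hz => hsign i z (hsub hz)
  have hdist : |v i (p + c * z) / t - V (p + c * z) / t| ≤ 1 / 3200 := by
    have := (hi _ (hsub (mapsTo_add_mul_ball p hc 4 hz))).le
    rw [← sub_div, abs_div, abs_of_pos ht, div_le_iff₀ ht, ← Real.dist_eq, dist_comm]
    linarith
  calc |v i (p + c * z) / t - (z ^ k).im| ≤ 1 / 3200 + 1 / 3200 :=
        (abs_sub_le _ _ _).trans (add_le_add hdist (hVk z hz))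
    _ = 1 / 1600 := by norm_num

theorem exists_eventually_harnackOn_div (hΩ : IsOpen Ω) (hp : p ∈ Ω)
    (hu : ∀ i, HarmonicOnNhd (u i) Ω) (hv : ∀ i, HarmonicOnNhd (v i) Ω)
    (hsign : ∀ i, ∀ z ∈ Ω, SignType.sign (v i z) = SignType.sign (u i z))
    (hV : HarmonicAt V p) (hV₀ : ¬ V =ᶠ[𝓝 p] 0) (hlim : TendstoLocallyUniformlyOn v V l Ω) :
    ∃ N ∈ 𝓝 p, ∃ C, 0 ≤ C ∧
      ∀ᶠ i in l, HarnackOn C (fun z => u i z / v i z) {z ∈ N | v i z ≠ 0} := by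
  obtain ⟨R, hR, hsub⟩ := Metric.nhds_basis_closedBall.mem_iff.1 (hΩ.mem_nhds hp)
  have hlimR := (tendstoLocallyUniformlyOn_iff_forall_isCompact hΩ).1 hlim _ hsub
    (isCompact_closedBall p R)
  by_cases hVp : V p = 0
  · exact exists_eventually_harnackOn_div_of_eq_zero hR (fun i => (hu i).mono hsub)
      (fun i => (hv i).mono hsub) (fun i z hz => hsign i z (hsub hz)) hV hVp hV₀ hlimR
  · exact exists_eventually_harnackOn_div_of_ne_zero hR (fun i => (hu i).mono hsub)
      (fun i => (hv i).mono hsub) (fun i z hz => hsign i z (hsub hz)) hV.1.continuousAt hVp hlimR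

theorem exists_eventually_norm_fderiv_div_le (hΩ : IsOpen Ω)
    (hu : ∀ i, HarmonicOnNhd (u i) Ω) (hv : ∀ i, HarmonicOnNhd (v i) Ω)
    (hsign : ∀ i, ∀ z ∈ Ω, SignType.sign (v i z) = SignType.sign (u i z))
    (hV : HarmonicOnNhd V Ω) (hV₀ : ∀ p ∈ Ω, ¬ V =ᶠ[𝓝 p] 0)
    (hlim : TendstoLocallyUniformlyOn v V l Ω) {K : Set ℂ} (hK : IsCompact K) (hKΩ : K ⊆ Ω) :
    ∃ C, ∀ᶠ i in l, ∀ z ∈ K, v i z ≠ 0 →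
      ‖fderiv ℝ (fun y => u i y / v i y) z‖ ≤ C * (u i z / v i z) := by
  have hnonneg : ∀ i, ∀ z ∈ Ω, 0 ≤ u i z / v i z := fun i z hz =>
    div_nonneg_of_sign_eq (hsign i z hz)
  suffices ∃ C, ∀ᶠ i in l, ∀ z ∈ K, z ∈ Ω → v i z ≠ 0 →
      ‖fderiv ℝ (fun y => u i y / v i y) z‖ ≤ C * (u i z / v i z) by
    obtain ⟨C, hC⟩ := this
    exact ⟨C, hC.mono fun i hi z hz => hi z hz (hKΩ hz)⟩
  refine hK.induction_on (p := fun S => ∃ C, ∀ᶠ i in l, ∀ z ∈ S, z ∈ Ω → v i z ≠ 0 →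
    ‖fderiv ℝ (fun y => u i y / v i y) z‖ ≤ C * (u i z / v i z)) (by simp) ?_ ?_ ?_
  · rintro S T hST ⟨C, hC⟩
    exact ⟨C, hC.mono fun i hi z hz => hi z (hST hz)⟩
  · rintro S T ⟨C, hC⟩ ⟨D, hD⟩
    refine ⟨max C D, ?_⟩
    filter_upwards [hC, hD] with i hCi hDi z hz hzΩ hvz
    obtain hz | hz := hz
    · exact (hCi z hz hzΩ hvz).trans
        (mul_le_mul_of_nonneg_right (le_max_left C D) (hnonneg i z hzΩ))
    · exact (hDi z hz hzΩ hvz).trans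
        (mul_le_mul_of_nonneg_right (le_max_right C D) (hnonneg i z hzΩ))
  · intro p hp
    obtain ⟨N, hN, C, hC, hev⟩ := exists_eventually_harnackOn_div hΩ (hKΩ hp) hu hv hsign
      (hV p (hKΩ hp)) (hV₀ p (hKΩ hp)) hlim
    refine ⟨interior N, mem_nhdsWithin_of_mem_nhds (interior_mem_nhds.2 hN), 2 * C, ?_⟩
    filter_upwards [hev] with i hi z hz hzΩ hvz
    exact hi.norm_fderiv_le hC (inter_mem (mem_interior_iff_mem_nhds.1 hz)
      ((hv i z hzΩ).1.continuousAt.eventually_ne hvz)) (hnonneg i z hzΩ)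

lemma not_eventuallyEq_zero_of_harmonicOnNhd (hV : HarmonicOnNhd V Ω) (hΩ : IsPreconnected Ω)
    {x : ℂ} (hx : x ∈ Ω) (hVx : V x ≠ 0) {p : ℂ} (hp : p ∈ Ω) : ¬ V =ᶠ[𝓝 p] 0 := fun h =>
  hVx (AnalyticOnNhd.eqOn_zero_of_preconnected_of_eventuallyEq_zero
    (fun z hz => HarmonicAt.analyticAt (hV z hz)) hΩ hp h hx)

end Local

section Sequence

lemma exists_forall_of_eventually_atTop_of_monotone {P : ℕ → ℝ → Prop}
    (hmono : ∀ m, Monotone (P m)) (hevent : ∃ C, ∀ᶠ m in atTop, P m C) (hP : ∀ m, ∃ C, P m C) :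
    ∃ C, ∀ m, P m C := by
  obtain ⟨C, hC⟩ := hevent
  choose D hD using hP
  rw [← Nat.cofinite_eq_atTop, eventually_cofinite] at hC
  obtain ⟨B, hB⟩ := (hC.image D).bddAbove
  refine ⟨max C B, fun m => ?_⟩
  by_cases hm : P m C
  · exact hmono m (le_max_left C B) hm
  · exact hmono m ((hB (mem_image_of_mem D hm)).trans (le_max_right C B)) (hD m)

lemma tendstoLocallyUniformlyOn_pure {ι X Y : Type*} [TopologicalSpace X] [UniformSpace Y]
    (f : ι → X → Y) (i : ι) (S : Set X) : TendstoLocallyUniformlyOn f (f i) (pure i) S :=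
  fun _ hU _ _ => ⟨univ, univ_mem, mem_pure.2 fun _ _ => refl_mem_uniformity hU⟩

theorem exists_forall_norm_fderiv_div_le {u v : ℕ → ℂ → ℝ} {V : ℂ → ℝ} {Ω K : Set ℂ}
    (hΩ : IsOpen Ω) (hΩ' : IsPreconnected Ω) (hK : IsCompact K) (hKΩ : K ⊆ Ω)
    (hu : ∀ m, HarmonicOnNhd (u m) Ω) (hv : ∀ m, HarmonicOnNhd (v m) Ω)
    (hsign : ∀ m, ∀ z ∈ Ω, SignType.sign (v m z) = SignType.sign (u m z))
    (hV : HarmonicOnNhd V Ω) (hV₀ : ∃ x ∈ Ω, V x ≠ 0)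
    (hlim : TendstoLocallyUniformlyOn v V atTop Ω) :
    ∃ C, ∀ m, ∀ z ∈ K, v m z ≠ 0 →
      ‖fderiv ℝ (fun y => u m y / v m y) z‖ ≤ C * (u m z / v m z) := by
  refine exists_forall_of_eventually_atTop_of_monotone
    (fun m C D hCD hC z hz hvz => (hC z hz hvz).trans ?_) ?_ fun m => ?_
  · exact mul_le_mul_of_nonneg_right hCD (div_nonneg_of_sign_eq (hsign m z (hKΩ hz)))
  · obtain ⟨x, hx, hVx⟩ := hV₀
    exact exists_eventually_norm_fderiv_div_le hΩ hu hv hsign hV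
      (fun p => not_eventuallyEq_zero_of_harmonicOnNhd hV hΩ' hx hVx) hlim hK hKΩ
  · by_cases hvm : ∃ x ∈ Ω, v m x ≠ 0
    · obtain ⟨x, hx, hvx⟩ := hvm
      simpa only [eventually_pure] using exists_eventually_norm_fderiv_div_le hΩ hu hv hsign (hv m)
        (fun p => not_eventuallyEq_zero_of_harmonicOnNhd (hv m) hΩ' hx hvx)
        (tendstoLocallyUniformlyOn_pure v m Ω) hK hKΩ
    · exact ⟨0, fun z hz hvz => absurd ⟨z, hKΩ hz, hvz⟩ hvm⟩

end Sequence

/-! ### Transport to the Euclidean plane -/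

section Plane

/-- The standard isometry `x + iy ↦ (x, y)`, along which the problem is transported to `ℂ`. -/
abbrev planeEquiv : ℂ ≃ₗᵢ[ℝ] En 2 := Complex.orthonormalBasisOneI.repr

lemma laplacian_comp_planeEquiv (w : En 2 → ℝ) (z : ℂ) :
    Laplacian.laplacian (w ∘ planeEquiv) z = laplacianAt w (planeEquiv z) := by
  have hcomp : iteratedFDeriv ℝ 2 (w ∘ planeEquiv) z =
      (iteratedFDeriv ℝ 2 w (planeEquiv z)).compContinuousLinearMap
        fun _ => planeEquiv.toContinuousLinearEquiv := by
    have h := planeEquiv.toContinuousLinearEquiv.iteratedFDerivWithin_comp_right w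
      uniqueDiffOn_univ (mem_univ (planeEquiv z)) 2
    rwa [preimage_univ, iteratedFDerivWithin_univ, iteratedFDerivWithin_univ] at h
  rw [laplacian_eq_iteratedFDeriv_orthonormalBasis _ Complex.orthonormalBasisOneI, laplacianAt]
  refine Finset.sum_congr rfl fun i _ => ?_
  rw [hcomp, ContinuousMultilinearMap.compContinuousLinearMap_apply]
  congr 1
  funext j
  fin_cases j <;> exact Complex.orthonormalBasisOneI.repr_self i

lemma harmonicOnNhd_comp_planeEquiv_iff {w : En 2 → ℝ} {Ω : Set (En 2)} (hΩ : IsOpen Ω) :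
    HarmonicOnNhd (w ∘ planeEquiv) (planeEquiv ⁻¹' Ω) ↔ HarmonicOnSet w Ω := by
  have hcont (z : ℂ) : ContDiffAt ℝ 2 (w ∘ planeEquiv) z ↔ ContDiffAt ℝ 2 w (planeEquiv z) := by
    have h := planeEquiv.toContinuousLinearEquiv.contDiffAt_comp_iff (𝕜 := ℝ) (n := 2) (f := w)
      (x := planeEquiv.toContinuousLinearEquiv z)
    rwa [ContinuousLinearEquiv.symm_apply_apply] at h
  constructor
  · refine fun h => ⟨fun x hx => ?_, fun x hx => ?_⟩
    all_goals obtain ⟨z, rfl⟩ := planeEquiv.surjective x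
    · exact ((hcont z).1 (h z hx).1).contDiffWithinAt
    · rw [← laplacian_comp_planeEquiv]
      exact (h z hx).2.self_of_nhds
  · refine fun h z hz => ⟨(hcont z).2 (h.1.contDiffAt (hΩ.mem_nhds hz)), ?_⟩
    filter_upwards [(hΩ.preimage planeEquiv.continuous).mem_nhds hz] with y hy
    rw [laplacian_comp_planeEquiv, h.2 _ hy, Pi.zero_apply]

lemma norm_gradient_planeEquiv (f : En 2 → ℝ) (z : ℂ) :
    ‖gradient f (planeEquiv z)‖ = ‖fderiv ℝ (f ∘ planeEquiv) z‖ := by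
  rw [gradient, LinearIsometryEquiv.norm_map, ← norm_iteratedFDeriv_one, ← norm_iteratedFDeriv_one,
    planeEquiv.norm_iteratedFDeriv_comp_right]

lemma sign_eq_of_zeroSet_eq {n : ℕ} {u v : En n → ℝ} {Ω : Set (En n)}
    (hz : zeroSet u Ω = zeroSet v Ω) (hpos : ∀ x ∈ Ω \ zeroSet u Ω, 0 < u x * v x) :
    ∀ x ∈ Ω, SignType.sign (v x) = SignType.sign (u x) := by
  intro x hx
  by_cases hxu : x ∈ zeroSet u Ω
  · rw [hxu.2, (hz ▸ hxu : x ∈ zeroSet v Ω).2]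
  · obtain ⟨hu, hv⟩ | ⟨hu, hv⟩ := mul_pos_iff.1 (hpos x ⟨hx, hxu⟩)
    · rw [sign_pos hu, sign_pos hv]
    · rw [sign_neg hu, sign_neg hv]

lemma harmonicOnSet_im_pow {Ω : Set (En 2)} (hΩ : IsOpen Ω) (k : ℕ) :
    HarmonicOnSet (fun x => (((x 0 : ℂ) + (x 1 : ℂ) * Complex.I) ^ k).im) Ω := by
  refine (harmonicOnNhd_comp_planeEquiv_iff hΩ).1 fun z _ => ?_
  have hpow : (fun x : En 2 => (((x 0 : ℂ) + (x 1 : ℂ) * Complex.I) ^ k).im) ∘ planeEquiv =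
      fun y : ℂ => (y ^ k).im := by
    funext y
    simp [Complex.orthonormalBasisOneI_repr_apply, Complex.re_add_im]
  rw [hpow]
  exact AnalyticAt.harmonicAt_im (by fun_prop)

lemma exists_mem_ball_im_pow_ne_zero {k : ℕ} (hk : 0 < k) :
    ∃ x ∈ ball (0 : En 2) 1, (((x 0 : ℂ) + (x 1 : ℂ) * Complex.I) ^ k).im ≠ 0 := by
  obtain ⟨z, hz⟩ := IsAlgClosed.exists_pow_nat_eq (Complex.I / 2) hk
  refine ⟨planeEquiv z, ?_, ?_⟩
  · rw [mem_ball_zero_iff, LinearIsometryEquiv.norm_map, ← pow_lt_one_iff_of_nonneg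
      (norm_nonneg z) hk.ne', ← norm_pow, hz]
    norm_num
  · simp [Complex.orthonormalBasisOneI_repr_apply, Complex.re_add_im, hz]

end Plane

theorem stmt9_general {u v : ℕ → En 2 → ℝ} {V : En 2 → ℝ} {Ω K : Set (En 2)}
    (hΩ : IsOpen Ω) (hΩ' : IsPreconnected Ω) (hK : IsCompact K) (hKΩ : K ⊆ Ω)
    (hu : ∀ m, HarmonicOnSet (u m) Ω) (hv : ∀ m, HarmonicOnSet (v m) Ω)
    (hz : ∀ m, zeroSet (u m) Ω = zeroSet (v m) Ω)
    (hpos : ∀ m, ∀ x ∈ Ω \ zeroSet (u m) Ω, 0 < u m x * v m x)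
    (hV : HarmonicOnSet V Ω) (hV₀ : ∃ x ∈ Ω, V x ≠ 0)
    (hlim : TendstoLocallyUniformlyOn v V atTop Ω) :
    ∃ C : ℝ, ∀ m, ∀ x ∈ K \ zeroSet (v m) Ω,
      ‖gradient (fun z => u m z / v m z) x‖ ≤ C * (u m x / v m x) := by
  have hharm {w : En 2 → ℝ} (hw : HarmonicOnSet w Ω) :
      HarmonicOnNhd (w ∘ planeEquiv) (planeEquiv ⁻¹' Ω) :=
    (harmonicOnNhd_comp_planeEquiv_iff hΩ).2 hw
  obtain ⟨C, hC⟩ := exists_forall_norm_fderiv_div_le (hΩ.preimage planeEquiv.continuous)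
    (planeEquiv.toHomeomorph.isPreconnected_preimage.2 hΩ')
    (planeEquiv.toHomeomorph.isCompact_preimage.2 hK) (preimage_mono hKΩ)
    (fun m => hharm (hu m)) (fun m => hharm (hv m))
    (fun m z => sign_eq_of_zeroSet_eq (hz m) (hpos m) (planeEquiv z))
    (hharm hV) (planeEquiv.surjective.exists.1 hV₀)
    (hlim.comp planeEquiv (mapsTo_preimage planeEquiv Ω) planeEquiv.continuous.continuousOn)
  refine ⟨C, fun m => planeEquiv.surjective.forall.2 fun z ⟨hzK, hzv⟩ => ?_⟩
  rw [norm_gradient_planeEquiv]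
  exact hC m z hzK fun hvz => hzv ⟨hKΩ hzK, hvz⟩

theorem stmt9 (u v : ℕ → En 2 → ℝ) (U : En 2 → ℝ) (k : ℕ) (hk : 0 < k)
    (hu : ∀ m, HarmonicOnSet (u m) (ball 0 1))
    (hv : ∀ m, HarmonicOnSet (v m) (ball 0 1))
    (hz : ∀ m, zeroSet (u m) (ball 0 1) = zeroSet (v m) (ball 0 1))
    (hpos : ∀ m, ∀ x ∈ ball (0 : En 2) 1 \ zeroSet (u m) (ball 0 1), 0 < u m x * v m x)
    (hU : HarmonicOnSet U (ball 0 1))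
    (hUne : ∃ x ∈ ball (0 : En 2) 1, U x ≠ 0)
    (hconvU : ∀ K : Set (En 2), K ⊆ ball (0 : En 2) 1 → IsCompact K →
      TendstoUniformlyOn (fun m x => u m x) U atTop K)
    (hconvV : ∀ K : Set (En 2), K ⊆ ball (0 : En 2) 1 → IsCompact K →
      TendstoUniformlyOn (fun m x => v m x)
        (fun x => (((x 0 : ℂ) + (x 1 : ℂ) * Complex.I) ^ k).im) atTop K) :
    ∃ C : ℝ, ∀ m, ∀ x ∈ ball (0 : En 2) (1/4) \ zeroSet (v m) (ball 0 1),
      ‖gradient (fun z => u m z / v m z) x‖ ≤ C * (u m x / v m x) := by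
  obtain ⟨C, hC⟩ := stmt9_general isOpen_ball isPreconnected_ball (isCompact_closedBall 0 (1 / 4))
    (closedBall_subset_ball (by norm_num)) hu hv hz hpos (harmonicOnSet_im_pow isOpen_ball k)
    (exists_mem_ball_im_pow_ne_zero hk)
    ((tendstoLocallyUniformlyOn_iff_forall_isCompact isOpen_ball).2 hconvV)
  exact ⟨C, fun m x hx => hC m x ⟨ball_subset_closedBall hx.1, hx.2⟩⟩
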